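/- arXiv:2501.13729 — 2 statements merged into one kernel-verified Lean document; each statement's English description precedes it below -/
import Mathlib

section
/- Let n be a positive integer and define the matrices A = [[1/2, 0], [2, 2]], B = [[1/2, 0], [0, 2]], and C = [[1/2, 9n], [0, 2]], all of determinant 1. Then the multiplicative semigroup generated by A, B, C is free on these three generators: for all k, k' ≥ 1 and all words w ∈ {1,2,3}^k and w' ∈ {1,2,3}^{k'}, if the ordered matrix products obtained by substituting 1 ↦ A, 2 ↦ B, 3 ↦ C into w and w' are equal, then k = k' and w = w'. -/
noncomputable section

/-!
Apply the products to the column vector `(1, 2)`. After multiplying each generator by `2` the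
letters act on integer vectors by
`A (x, y) = (x, 4x + 4y)`, `B (x, y) = (x, 4y)`, `C (x, y) = (x + 18 n y, 4y)`,
so the vector `(x, y)` reached by a word of length `k` has `x` odd and positive and `y` even and
nonnegative, and the original product sends `(1, 2)` to `(x, y) / 2 ^ k`. As `x` is odd, `k` is
the `2`-adic valuation of the denominator of the first coordinate, so it is determined by the
product.

For words of the same length, the first letter is `A` exactly when `y ≡ 4 (mod 8)`. It remains to
separate `B` from `C` in first position. An equality `B u = C v` says that `u` is the shear
`(x, y) ↦ (x + 18 n m y, y)` of `v` with `m = 1`, and `orbit_shear_ne` excludes this for all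
`m ≥ 1`. Indeed the sheared vector is too flat to lie in the image of `A`, so by the congruence
both words start with `B` or `C`; removing these letters turns `m` into `4 m + ε` with
`ε ∈ {-1, 0, 1}`, which is again at least `1`, and the process ends at the empty word, where the
second coordinate `2 ≠ 0` makes the shear nontrivial.
-/

/-- The action on integer column vectors of twice the matrix `A`, `B`, `C` attached to the letter
`0`, `1`, `2`. -/
def letterAct (n : ℕ) (i : Fin 3) (p : ℤ × ℤ) : ℤ × ℤ :=
  ![(p.1, 4 * p.1 + 4 * p.2), (p.1, 4 * p.2), (p.1 + 18 * n * p.2, 4 * p.2)] i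

/-- The image of `(1, 2)` under the product of the doubled matrices along a word. -/
def orbit (n : ℕ) (w : List (Fin 3)) : ℤ × ℤ := w.foldr (letterAct n) (1, 2)

lemma orbit_cons (n : ℕ) (i : Fin 3) (w : List (Fin 3)) :
    orbit n (i :: w) = letterAct n i (orbit n w) := rfl

lemma orbit_spec (n : ℕ) (w : List (Fin 3)) :
    0 < (orbit n w).1 ∧ 0 ≤ (orbit n w).2 ∧ (orbit n w).1 % 2 = 1 ∧ (orbit n w).2 % 2 = 0 := by
  induction w with
  | nil => simp [orbit]
  | cons i w ih =>
    obtain ⟨h1, h2, h3, h4⟩ := ih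
    rw [orbit_cons]
    have h5 : 0 ≤ (n : ℤ) * (orbit n w).2 := by positivity
    fin_cases i <;> simp only [letterAct, Fin.zero_eta, Fin.mk_one, Fin.reduceFinMk,
      Matrix.cons_val, mul_assoc] <;> omega

/-- The orbit vectors of two words of equal length never differ by a nontrivial positive shear. -/
lemma orbit_shear_ne (n : ℕ) (hn : 0 < n) (w : List (Fin 3)) :
    ∀ (w' : List (Fin 3)) (m : ℤ), w.length = w'.length → 1 ≤ m →
      (orbit n w).1 = (orbit n w').1 + 18 * n * m * (orbit n w').2 →
      (orbit n w).2 ≠ (orbit n w').2 := by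
  have hn' : (1 : ℤ) ≤ n := by exact_mod_cast hn
  induction w with
  | nil =>
    intro w' m hl hm h _
    obtain rfl : w' = [] := List.length_eq_zero_iff.mp hl.symm
    simp only [orbit, List.foldr_nil] at h
    nlinarith
  | cons i u ih =>
    intro w' m hl hm h h'
    cases w' with
    | nil => simp at hl
    | cons j v =>
      have hl' : u.length = v.length := by simpa using hl
      have key := fun m' => ih v m' hl'
      obtain ⟨a1, a2, a3, a4⟩ := orbit_spec n u
      obtain ⟨b1, b2, b3, b4⟩ := orbit_spec n v
      rw [orbit_cons, orbit_cons] at h h'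
      generalize orbit n u = p at *
      generalize orbit n v = q at *
      have hnm : 1 ≤ (n : ℤ) * m := by nlinarith
      fin_cases i <;> fin_cases j <;> simp only [letterAct, Fin.zero_eta, Fin.mk_one,
        Fin.reduceFinMk, Matrix.cons_val] at h' h
      -- both words start with `A`: the shear moves the first coordinate too far
      · rw [← h'] at h
        nlinarith
      · omega
      · omega
      · omega
      -- both words start with `B` or `C`: strip these letters and use the induction hypothesis
      · exact key (4 * m) (by linarith) (by linear_combination h) (by linarith)
      · exact key (4 * m + 1) (by linarith) (by linear_combination h) (by linarith)
      · omega
      · have e : p.2 = q.2 := by linarith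
        exact key (4 * m - 1) (by linarith) (by rw [e] at h; linear_combination h) e
      · have e : p.2 = q.2 := by linarith
        exact key (4 * m) (by linarith) (by rw [e] at h; linear_combination h) e

lemma orbit_injective_of_length (n : ℕ) (hn : 0 < n) (w : List (Fin 3)) :
    ∀ w' : List (Fin 3), w.length = w'.length → orbit n w = orbit n w' → w = w' := by
  induction w with
  | nil => intro w' hl _; exact (List.length_eq_zero_iff.mp hl.symm).symm
  | cons i u ih =>
    intro w' hl h
    cases w' with
    | nil => simp at hl
    | cons j v =>
      have hl' : u.length = v.length := by simpa using hl
      have key := ih v hl'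
      have s1 := orbit_shear_ne n hn u v 1 hl' le_rfl
      have s2 := orbit_shear_ne n hn v u 1 hl'.symm le_rfl
      obtain ⟨a1, a2, a3, a4⟩ := orbit_spec n u
      obtain ⟨b1, b2, b3, b4⟩ := orbit_spec n v
      rw [orbit_cons, orbit_cons] at h
      generalize orbit n u = p at *
      generalize orbit n v = q at *
      have h1 := congrArg Prod.fst h
      have h2 := congrArg Prod.snd h
      fin_cases i <;> fin_cases j <;> simp only [letterAct, Fin.zero_eta, Fin.mk_one,
        Fin.reduceFinMk, Matrix.cons_val] at h1 h2 ⊢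
      · rw [key (Prod.ext h1 (by linarith))]
      · omega
      · omega
      · omega
      · rw [key (Prod.ext h1 (by linarith))]
      · exact absurd (by linarith) (s1 (by linarith))
      · omega
      · exact absurd (by linarith) (s2 (by linarith))
      · have e : p.2 = q.2 := by linarith
        rw [e] at h1
        rw [key (Prod.ext (by linarith) e)]

open Matrix in
lemma prod_mulVec (n : ℕ) (F : Fin 3 → Matrix (Fin 2) (Fin 2) ℝ)
    (hF : F = ![!![(1:ℝ)/2, 0; 2, 2], !![(1:ℝ)/2, 0; 0, 2], !![(1:ℝ)/2, (9*n : ℝ); 0, 2]])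
    (w : List (Fin 3)) :
    (2 : ℝ) ^ w.length • ((w.map F).prod *ᵥ ![1, 2]) =
      ![((orbit n w).1 : ℝ), ((orbit n w).2 : ℝ)] := by
  induction w with
  | nil => simp [orbit]
  | cons i w ih =>
    rw [List.map_cons, List.prod_cons, ← Matrix.mulVec_mulVec, List.length_cons, pow_succ',
      mul_smul, ← Matrix.mulVec_smul, ih, orbit_cons, hF]
    ext k
    fin_cases i <;> fin_cases k <;>
      simp [letterAct] <;> ring

lemma exponent_eq_of_odd {k l : ℕ} {x y : ℤ} (hx : x % 2 = 1) (hy : y % 2 = 1)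
    (h : 2 ^ k * x = 2 ^ l * y) : k = l := by
  wlog hkl : k ≤ l generalizing k l x y
  · exact (this hy hx h.symm (by omega)).symm
  obtain ⟨d, rfl⟩ := Nat.exists_eq_add_of_le hkl
  rw [pow_add, mul_assoc] at h
  have h' : x = 2 ^ d * y := mul_left_cancel₀ (by positivity) h
  cases d with
  | zero => rfl
  | succ d => rw [pow_succ', mul_assoc] at h'; omega

/-- the semigroup generated by A = [[1/2,0],[2,2]], B = [[1/2,0],[0,2]] and
C = [[1/2,9n],[0,2]] (n ≥ 1) is free on these three generators: two words (nonempty finite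
sequences of letters) with equal ordered matrix products are equal (in particular they have
the same length). -/
theorem statement2 (n : ℕ) (hn : 0 < n)
    (F : Fin 3 → Matrix (Fin 2) (Fin 2) ℝ)
    (hF : F = ![!![(1:ℝ)/2, 0; 2, 2], !![(1:ℝ)/2, 0; 0, 2], !![(1:ℝ)/2, (9*n : ℝ); 0, 2]]) :
    ∀ w w' : List (Fin 3), w ≠ [] → w' ≠ [] →
      (w.map F).prod = (w'.map F).prod → w = w' := by
  intro w w' _ _ h
  have e := prod_mulVec n F hF w
  have e' := prod_mulVec n F hF w'
  rw [h] at e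
  have hv : (2 : ℝ) ^ w'.length • ![((orbit n w).1 : ℝ), ((orbit n w).2 : ℝ)] =
      (2 : ℝ) ^ w.length • ![((orbit n w').1 : ℝ), ((orbit n w').2 : ℝ)] := by
    rw [← e, ← e', smul_comm]
  have h0 := congrFun hv 0
  simp only [Pi.smul_apply, smul_eq_mul, Matrix.cons_val_zero] at h0
  have hlen : w'.length = w.length :=
    exponent_eq_of_odd (orbit_spec n w).2.2.1 (orbit_spec n w').2.2.1 (by exact_mod_cast h0)
  rw [← hlen, e'] at e
  have e0 := congrFun e 0
  have e1 := congrFun e 1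
  simp only [Matrix.cons_val_zero, Matrix.cons_val_one, Int.cast_inj] at e0 e1
  exact orbit_injective_of_length n hn w w' hlen.symm (Prod.ext e0.symm e1.symm)

end
end

section
/- Let I be a finite index set with |I| ≥ 2, let 𝒜 = (A_i)_{i∈I} be a uniformly hyperbolic family in SL₂(ℝ), and let p = (p_i)_{i∈I} be a nondegenerate probability vector. Then for every q > 0 the function s ↦ Ψ_q(s) has a unique real zero, denoted τ̃(q) (and for q > 1 this zero satisfies τ̃(q) > 0), and the function q ↦ τ̃(q) is real analytic on (0, ∞). -/
/-!
The proof is Ruelle's perturbation argument for the transfer operator of a Hölder potential, carried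
out on finite words instead of one-sided sequences.

*Potential.* Uniform hyperbolicity makes the norm almost multiplicative along words
(`opNorm_middle`, `quasi_mul`), and therefore the potential `log (‖A_{iw}‖² / ‖A_w‖²)` changes by an
exponentially small amount when `w` is altered beyond its `n`-th letter (`exists_phi_holder`). The sums
in `psiAvg` are then the iterates, at the empty word, of the transfer operator `L` whose weights are
`p_i ^ q` times the exponential of `s` times the potential. Averaging against normalised
Hölder weights contracts oscillations (`OscBound.avg`), so the ratios of consecutive iterates converge,
and the pressure is the logarithm of the leading eigenvalue (`exists_eigenvalue`).

*Existence and uniqueness of the zero.* As `‖A_w‖` grows exponentially, at a rate between two positive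
constants, the pressure is continuous and strictly increasing in `s` with slopes bounded away from
zero (`pressure_bounds`), which gives the zero (`existsUnique_zero`). At `s = 0` the pressure equals
`log Σ p_i ^ q`, which is negative when `q > 1`, so there the zero is positive (`zero_pos`).

*Analyticity.* Near a zero `(q₀, s₀)`, dividing by the eigenfunction (`exists_eigenfunction`) turns `L`
into a Markov average, which has a spectral gap on the Banach space `HSpace` of Hölder functions on
words (`isUnit_gap`). The weights depend analytically on `(q, s)` as multiplication operators of
that space. Inverting a rank-one correction gives a near-eigenfunction `g` with `T g = g + F • 1`,
where `T` is the perturbed average and the scalar `F (q, s)` is analytic (`exists_perturbation`).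
Comparing iterates, the zeros of `F` near `(q₀, s₀)` are zeros of the pressure, and the pressure is
bounded above by `log (1 + 2 |F|)` (`exists_local`). The latter and the linear growth of the pressure in `s`
force `∂F/∂s ≠ 0` (`fderiv_ne_zero`). The implicit function theorem gives an analytic curve of zeros
of `F`, which must be the curve of zeros of the pressure (`analyticAt_zero`).
-/

open MeasureTheory Filter Set Topology

namespace Paper

noncomputable section

abbrev Mat2 : Type := Matrix (Fin 2) (Fin 2) ℝ
abbrev SL2 : Type := Matrix.SpecialLinearGroup (Fin 2) ℝ

/-- The operator norm on 2×2 real matrices induced by the Euclidean norm on ℝ². -/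
def opNorm (M : Mat2) : ℝ := ‖(Matrix.toEuclideanLin M).toContinuousLinearMap‖

/-- The product `A_{i₁} ⋯ A_{i_n}` of the matrices along a word `w = (i₁, …, i_n)`. -/
def wordProd {ι : Type*} (A : ι → SL2) (w : List ι) : SL2 := (w.map A).prod

/-- The product `p_{i₁} ⋯ p_{i_n}` of the weights along a word `w = (i₁, …, i_n)`. -/
def wordWeight {ι : Type*} (p : ι → ℝ) (w : List ι) : ℝ := (w.map p).prod

/-- A finite family in SL₂(ℝ) is uniformly hyperbolic if `‖A_i‖ ≥ c rⁿ` for all words of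
length `n ≥ 1`. -/
def UniformlyHyperbolic {ι : Type*} (A : ι → SL2) : Prop :=
  ∃ c > (0:ℝ), ∃ r > (1:ℝ), ∀ w : List ι, w ≠ [] →
    c * r ^ w.length ≤ opNorm (wordProd A w : Mat2)

/-- Strongly Diophantine: distinct words of the same length give matrices that are
exponentially separated. -/
def StronglyDiophantine {ι : Type*} (A : ι → SL2) : Prop :=
  ∃ c ∈ Set.Ioo (0:ℝ) 1, ∀ w w' : List ι, w ≠ [] → w.length = w'.length → w ≠ w' →
    c ^ w.length ≤ opNorm ((wordProd A w : Mat2) - (wordProd A w' : Mat2))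

/-- The real projective line. -/
abbrev RP1 : Type := Projectivization ℝ (Fin 2 → ℝ)

lemma cos_sin_ne_zero (θ : ℝ) : ![Real.cos θ, Real.sin θ] ≠ 0 := by
  intro h
  have h0 : Real.cos θ = 0 := by simpa using congrFun h 0
  have h1 : Real.sin θ = 0 := by simpa using congrFun h 1
  have h2 := Real.sin_sq_add_cos_sq θ
  rw [h0, h1] at h2
  norm_num at h2

/-- The point of ℝP¹ in the direction of angle `θ`. -/
def dir (θ : ℝ) : RP1 := Projectivization.mk ℝ ![Real.cos θ, Real.sin θ] (cos_sin_ne_zero θ)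

/-- The quotient topology on ℝP¹ (expressed through the angle parametrization). -/
instance : TopologicalSpace RP1 := TopologicalSpace.coinduced dir inferInstance

/-- The Borel σ-algebra on ℝP¹. -/
instance : MeasurableSpace RP1 := borel RP1

/-- The natural action of `A ∈ SL₂(ℝ)` on ℝP¹, `A·[v] = [Av]`. -/
def pact (A : SL2) : RP1 → RP1 :=
  Projectivization.map (Matrix.SpecialLinearGroup.toLin' A).toLinearMap
    (Matrix.SpecialLinearGroup.toLin' A).injective

/-- `K` is the attractor of the family `A`: the (unique) nonempty compact set with
`K = ⋃ᵢ Aᵢ·K`. -/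
def IsAttractor {ι : Type*} [Fintype ι] (A : ι → SL2) (K : Set RP1) : Prop :=
  K.Nonempty ∧ IsCompact K ∧ K = ⋃ i : ι, pact (A i) '' K

/-- `ν` is stationary for the family `A` with weights `p`: `ν = Σ_i p_i (A_i)_* ν`. -/
def IsStationary {ι : Type*} [Fintype ι] (A : ι → SL2) (p : ι → ℝ) (ν : Measure RP1) : Prop :=
  ν = ∑ i : ι, ENNReal.ofReal (p i) • Measure.map (pact (A i)) ν

/-- The `k`-th arc of the `2^{-m}` dyadic partition of ℝP¹. -/
def dyadic (m k : ℕ) : Set RP1 :=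
  dir '' Set.Ico (Real.pi * k / 2 ^ m) (Real.pi * (k + 1) / 2 ^ m)

/-- The concentric doubled arc `2I` of the `k`-th arc of the `2^{-m}` dyadic partition. -/
def dyadic2 (m k : ℕ) : Set RP1 :=
  dir '' Set.Ico (Real.pi * ((k : ℝ) - 1 / 2) / 2 ^ m) (Real.pi * ((k : ℝ) + 3 / 2) / 2 ^ m)

/-- `Σ_{I ∈ 𝒟_m} ν(I)^q`. -/
def lqSum (ν : Measure RP1) (q : ℝ) (m : ℕ) : ℝ :=
  ∑ k ∈ Finset.range (2 ^ m), ((ν (dyadic m k)).toReal) ^ q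

/-- The L^q spectrum `τ(ν,q) = liminf_m −(1/m) log₂ Σ_{I∈𝒟_m} ν(I)^q`. -/
def lqSpectrum (ν : Measure RP1) (q : ℝ) : ℝ :=
  Filter.liminf (fun m : ℕ => -(1 / (m : ℝ)) * Real.logb 2 (lqSum ν q m)) Filter.atTop

/-- `(1/n) log₂ Σ_{i ∈ Iⁿ} p_i^q ‖A_i‖^{2s}`, the `n`-th approximant of the pressure
`Ψ_q(s)`. -/
def psiAvg {ι : Type*} [Fintype ι] (A : ι → SL2) (p : ι → ℝ) (q s : ℝ) (n : ℕ) : ℝ :=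
  (1 / (n : ℝ)) * Real.logb 2
    (∑ w : Fin n → ι,
      (wordWeight p (List.ofFn w)) ^ q * (opNorm (wordProd A (List.ofFn w) : Mat2)) ^ (2 * s))

/-- `t = τ̃(q)`: `t` is the unique positive zero of the pressure function `Ψ_q`. -/
def IsPressureZero {ι : Type*} [Fintype ι] (A : ι → SL2) (p : ι → ℝ) (q t : ℝ) : Prop :=
  0 < t ∧
  Filter.Tendsto (fun n => psiAvg A p q t n) Filter.atTop (nhds 0) ∧
  ∀ s : ℝ, 0 < s → Filter.Tendsto (fun n => psiAvg A p q s n) Filter.atTop (nhds 0) → s = t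

/-- The angle metric on ℝP¹: `d([v],[w]) = arccos(|⟨v,w⟩| / (‖v‖ ‖w‖))`. -/
def pdist (x y : RP1) : ℝ :=
  Real.arccos (|x.rep 0 * y.rep 0 + x.rep 1 * y.rep 1| /
    (Real.sqrt (x.rep 0 ^ 2 + x.rep 1 ^ 2) * Real.sqrt (y.rep 0 ^ 2 + y.rep 1 ^ 2)))

/-- The open ball in ℝP¹ of radius `r` and center `x`. -/
def pball (x : RP1) (r : ℝ) : Set RP1 := {y | pdist x y < r}

instance : Fact (0 < Real.pi) := ⟨Real.pi_pos⟩

/-- The angle coordinate `Θ : ℝP¹ → ℝ/πℤ`. -/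
def theta (x : RP1) : AddCircle Real.pi :=
  ((Complex.arg ((x.rep 0 : ℂ) + (x.rep 1 : ℂ) * Complex.I) : ℝ) : AddCircle Real.pi)

/-- `w` is a `2^m` stopping word for the family `A`. -/
def IsStopping {ι : Type*} (A : ι → SL2) (m : ℕ) (w : List ι) : Prop :=
  w ≠ [] ∧
  (∀ j : ℕ, 1 ≤ j → j < w.length → opNorm (wordProd A (w.take j) : Mat2) ^ 2 < (2:ℝ) ^ m) ∧
  (2 : ℝ) ^ m ≤ opNorm (wordProd A w : Mat2) ^ 2

/-- `Σ_{i ∈ Ω_m} p_i^q`, the `L^q` sum over the `2^m` stopping words. -/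
def stopSum {ι : Type*} [Fintype ι] (A : ι → SL2) (p : ι → ℝ) (q : ℝ) (m : ℕ) : ℝ :=
  ∑' w : List ι,
    Set.indicator {w : List ι | IsStopping A m w} (fun w => (wordWeight p w) ^ q) w

/-- `Σ_{J ∈ 𝒟_{s+m}(I)} ν(J)^q` for `I` the `k`-th arc of `𝒟_s`. -/
def localSum (ν : Measure RP1) (q : ℝ) (s m k : ℕ) : ℝ :=
  ∑ j ∈ Finset.range (2 ^ (s + m)),
    Set.indicator {j : ℕ | (dyadic (s + m) j ∩ dyadic s k).Nonempty}
      (fun j => (ν (dyadic (s + m) j)).toReal ^ q) j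

/-! ### Norms of real 2×2 matrices -/

section Norms
open scoped Matrix.Norms.L2Operator

lemma opNorm_eq (M : Mat2) : opNorm M = ‖M‖ := rfl

lemma opNorm_nonneg (M : Mat2) : 0 ≤ opNorm M := norm_nonneg _

lemma opNorm_mul_le (M N : Mat2) : opNorm (M * N) ≤ opNorm M * opNorm N := norm_mul_le M N

lemma opNorm_one : opNorm (1 : Mat2) = 1 := by rw [opNorm_eq]; exact norm_one

lemma opNorm_transpose (M : Mat2) : opNorm M.transpose = opNorm M := by
  have := Matrix.l2_opNorm_conjTranspose M
  rwa [Matrix.conjTranspose_eq_transpose_of_trivial] at this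

lemma opNorm_sub_le (M N : Mat2) : |opNorm M - opNorm N| ≤ opNorm (M - N) := abs_norm_sub_norm_le M N

lemma opNorm_vecMulVec (u v : Fin 2 → ℝ) :
    opNorm (Matrix.vecMulVec u v) = ‖WithLp.toLp 2 u‖ * ‖WithLp.toLp 2 v‖ := by
  have h : Matrix.vecMulVec u v = Matrix.vecMulVec u (star v) := by simp
  rw [opNorm]
  have : (Matrix.toEuclideanLin (Matrix.vecMulVec u v)).toContinuousLinearMap
      = InnerProductSpace.rankOne ℝ (WithLp.toLp 2 u) (WithLp.toLp 2 v) := by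
    ext x i
    simp [Matrix.toEuclideanLin, Matrix.mulVec, dotProduct, Matrix.vecMulVec_apply, PiLp.inner_apply]
    ring
  rw [this, InnerProductSpace.norm_rankOne]

lemma abs_entry_le (M : Mat2) (i j : Fin 2) : |M i j| ≤ opNorm M := by
  have h := Matrix.l2_opNorm_mulVec M (EuclideanSpace.single j (1:ℝ))
  have h2 := (PiLp.norm_apply_le (p := 2) (WithLp.toLp 2 (M.mulVec (EuclideanSpace.single j (1:ℝ)))) i).trans h
  rw [opNorm_eq]
  simpa using h2

lemma opNorm_le_sum (M : Mat2) : opNorm M ≤ ∑ i, ∑ j, |M i j| := by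
  have h := Matrix.matrix_eq_sum_single M
  rw [opNorm_eq]
  conv_lhs => rw [h]
  refine (norm_sum_le _ _).trans (Finset.sum_le_sum fun i _ => (norm_sum_le _ _).trans
    (Finset.sum_le_sum fun j _ => ?_))
  have : Matrix.single i j (M i j) = Matrix.vecMulVec (Pi.single i (M i j)) (Pi.single j 1) := by
    ext a b
    simp [Matrix.single_apply, Matrix.vecMulVec_apply, Pi.single_apply]
    grind
  rw [this, ← opNorm_eq, opNorm_vecMulVec]
  simp

/-- A unimodular matrix is within `4 / ‖y‖` of a rank-one matrix: eliminate along the entry of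
largest modulus, which leaves a single entry `± 1 / pivot`. -/
lemma exists_rankOne_approx (y : SL2) :
    ∃ u v : Fin 2 → ℝ, opNorm ((y : Mat2) - Matrix.vecMulVec u v) ≤ 4 / opNorm (y : Mat2) := by
  obtain ⟨⟨i₀, j₀⟩, -, hmax⟩ := Finset.exists_max_image (Finset.univ : Finset (Fin 2 × Fin 2))
    (fun k => |(y : Mat2) k.1 k.2|) ⟨(0, 0), Finset.mem_univ _⟩
  have hm : ∀ i j, |(y : Mat2) i j| ≤ |(y : Mat2) i₀ j₀| := fun i j => hmax (i, j) (Finset.mem_univ _)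
  have hdet := y.det_coe
  rw [Matrix.det_fin_two] at hdet
  have hpiv : (y : Mat2) i₀ j₀ ≠ 0 := by
    intro h0
    have h : ∀ i j, (y : Mat2) i j = 0 := fun i j => by
      have := hm i j
      rw [h0, abs_zero] at this
      exact abs_nonpos_iff.mp this
    simp [h] at hdet
  have hle : opNorm (y : Mat2) ≤ 4 * |(y : Mat2) i₀ j₀| := by
    refine (opNorm_le_sum _).trans ?_
    simp only [Fin.sum_univ_two]
    linarith [hm 0 0, hm 0 1, hm 1 0, hm 1 1]
  have hpos : 0 < opNorm (y : Mat2) := (abs_pos.mpr hpiv).trans_le (abs_entry_le _ _ _)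
  refine ⟨fun i => (y : Mat2) i j₀, fun j => (y : Mat2) i₀ j / (y : Mat2) i₀ j₀, ?_⟩
  have key : opNorm ((y : Mat2) - Matrix.vecMulVec (fun i => (y : Mat2) i j₀)
      (fun j => (y : Mat2) i₀ j / (y : Mat2) i₀ j₀)) ≤ 1 / |(y : Mat2) i₀ j₀| := by
    refine (opNorm_le_sum _).trans (le_of_eq ?_)
    generalize (y : Mat2) = Y at *
    have e : ∀ a b c d : ℝ, d ≠ 0 → a - b * (c / d) = (a * d - b * c) / d := fun a b c d hd => by
      field_simp
    simp only [Fin.sum_univ_two, Matrix.sub_apply, Matrix.vecMulVec_apply]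
    rw [e _ _ _ _ hpiv, e _ _ _ _ hpiv, e _ _ _ _ hpiv, e _ _ _ _ hpiv]
    simp only [abs_div]
    rw [← add_div, ← add_div, ← add_div]
    congr 1
    have h1 : |Y 0 0 * Y 1 1 - Y 0 1 * Y 1 0| = 1 := by rw [hdet, abs_one]
    have h2 : |Y 0 1 * Y 1 0 - Y 0 0 * Y 1 1| = 1 := by rw [abs_sub_comm]; exact h1
    have z : ∀ a b : ℝ, |a * b - b * a| = 0 := fun a b => by rw [mul_comm, sub_self, abs_zero]
    fin_cases i₀ <;> fin_cases j₀ <;> simp [mul_comm]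
    all_goals try rw [z, add_zero]
    all_goals first | exact h1 | exact h2 | (rw [mul_comm (Y 1 0)]; exact h2)
  refine key.trans ?_
  rw [div_le_div_iff₀ (abs_pos.mpr hpiv) hpos]
  linarith

lemma opNorm_inv_le (y : SL2) : opNorm ((y⁻¹ : SL2) : Mat2) ≤ 4 * opNorm (y : Mat2) := by
  refine (opNorm_le_sum _).trans ?_
  rw [Matrix.SpecialLinearGroup.SL2_inv_expl]
  simp only [Fin.sum_univ_two]
  have := abs_entry_le (y : Mat2)
  simp
  linarith [this 0 0, this 0 1, this 1 0, this 1 1]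

lemma opNorm_pos (y : SL2) : 0 < opNorm (y : Mat2) := by
  rcases (opNorm_nonneg (y : Mat2)).lt_or_eq with h | h
  · exact h
  · have h1 := opNorm_mul_le (y : Mat2) ((y⁻¹ : SL2) : Mat2)
    rw [← Matrix.SpecialLinearGroup.coe_mul, mul_inv_cancel, Matrix.SpecialLinearGroup.coe_one,
      opNorm_one, ← h] at h1
    linarith

lemma opNorm_le_mul_inv (x y : SL2) :
    opNorm (y : Mat2) ≤ 4 * opNorm (x : Mat2) * opNorm ((x * y : SL2) : Mat2) := by
  have h1 := opNorm_mul_le ((x⁻¹ : SL2) : Mat2) ((x * y : SL2) : Mat2)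
  rw [← Matrix.SpecialLinearGroup.coe_mul, inv_mul_cancel_left] at h1
  exact h1.trans (mul_le_mul_of_nonneg_right (opNorm_inv_le x) (opNorm_nonneg _))

lemma one_le_opNorm_sq (y : SL2) : 1 ≤ 4 * opNorm (y : Mat2) ^ 2 := by
  have h1 := opNorm_mul_le ((y⁻¹ : SL2) : Mat2) (y : Mat2)
  rw [← Matrix.SpecialLinearGroup.coe_mul, inv_mul_cancel, Matrix.SpecialLinearGroup.coe_one,
      opNorm_one] at h1
  nlinarith [opNorm_inv_le y, opNorm_pos y]

/-- Norms of products are multiplicative across a unimodular factor `y`, up to an error which does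
not involve `‖y‖`. For rank-one `y` the identity is exact, since
`‖x u vᵀ‖ ‖u vᵀ z‖ = ‖x u vᵀ z‖ ‖u vᵀ‖`. -/
lemma opNorm_middle (x z : Mat2) (y : SL2) :
    |opNorm (x * (y : Mat2)) * opNorm ((y : Mat2) * z)
      - opNorm (x * (y : Mat2) * z) * opNorm (y : Mat2)|
      ≤ 200 * (opNorm x * opNorm z) := by
  obtain ⟨u, v, huv⟩ := exists_rankOne_approx y
  set Y : Mat2 := y.1 with hY
  set R : Mat2 := Matrix.vecMulVec u v with hR
  have hexact : opNorm (x * R) * opNorm (R * z) = opNorm (x * R * z) * opNorm R := by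
    rw [hR, Matrix.mul_vecMulVec, Matrix.vecMulVec_mul, Matrix.vecMulVec_mul, opNorm_vecMulVec,
      opNorm_vecMulVec, opNorm_vecMulVec, opNorm_vecMulVec]
    ring
  have hYpos := opNorm_pos y
  have hY1 := one_le_opNorm_sq y
  change 0 < opNorm Y at hYpos
  change 1 ≤ 4 * opNorm Y ^ 2 at hY1
  set n := opNorm Y
  set d := opNorm (Y - R)
  have hd0 : 0 ≤ d := opNorm_nonneg _
  have hdn : d * n ≤ 4 := by rwa [le_div_iff₀ hYpos] at huv
  have hd : d ≤ 16 * n := by nlinarith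
  have hRn : opNorm R ≤ 17 * n := by
    have := abs_le.mp (opNorm_sub_le Y R)
    linarith [this.1]
  have hx := opNorm_nonneg x
  have hz := opNorm_nonneg z
  have hR0 := opNorm_nonneg R
  have h17 : 0 ≤ 17 * n := by linarith
  have a1 : |opNorm (x * Y) - opNorm (x * R)| ≤ opNorm x * d := by
    refine (opNorm_sub_le _ _).trans ?_
    rw [← mul_sub]; exact opNorm_mul_le _ _
  have a2 : |opNorm (Y * z) - opNorm (R * z)| ≤ d * opNorm z := by
    refine (opNorm_sub_le _ _).trans ?_
    rw [← sub_mul]; exact opNorm_mul_le _ _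
  have a3 : |opNorm (x * Y * z) - opNorm (x * R * z)| ≤ opNorm x * d * opNorm z := by
    refine (opNorm_sub_le _ _).trans ?_
    rw [← sub_mul, ← mul_sub]
    exact (opNorm_mul_le _ _).trans (mul_le_mul_of_nonneg_right (opNorm_mul_le _ _) hz)
  have a4 : |n - opNorm R| ≤ d := opNorm_sub_le _ _
  have b1 : opNorm (Y * z) ≤ n * opNorm z := opNorm_mul_le _ _
  have b2 : opNorm (x * R) ≤ opNorm x * (17 * n) :=
    (opNorm_mul_le _ _).trans (mul_le_mul_of_nonneg_left hRn hx)
  have b3 : opNorm (x * R * z) ≤ opNorm x * (17 * n) * opNorm z :=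
    (opNorm_mul_le _ _).trans (mul_le_mul_of_nonneg_right b2 hz)
  have e : opNorm (x * Y) * opNorm (Y * z) - opNorm (x * Y * z) * n
      = (opNorm (x * Y) - opNorm (x * R)) * opNorm (Y * z)
        + opNorm (x * R) * (opNorm (Y * z) - opNorm (R * z))
        - (opNorm (x * Y * z) - opNorm (x * R * z)) * n
        - opNorm (x * R * z) * (n - opNorm R) := by
    linear_combination hexact
  have c1 : |(opNorm (x * Y) - opNorm (x * R)) * opNorm (Y * z)| ≤
      (opNorm x * d) * (n * opNorm z) := by
    rw [abs_mul, abs_of_nonneg (opNorm_nonneg (Y * z))]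
    exact mul_le_mul a1 b1 (opNorm_nonneg _) (mul_nonneg hx hd0)
  have c2 : |opNorm (x * R) * (opNorm (Y * z) - opNorm (R * z))| ≤
      (opNorm x * (17 * n)) * (d * opNorm z) := by
    rw [abs_mul, abs_of_nonneg (opNorm_nonneg (x * R))]
    exact mul_le_mul b2 a2 (abs_nonneg _) (mul_nonneg hx h17)
  have c3 : |(opNorm (x * Y * z) - opNorm (x * R * z)) * n| ≤ (opNorm x * d * opNorm z) * n := by
    rw [abs_mul, abs_of_pos hYpos]
    exact mul_le_mul_of_nonneg_right a3 hYpos.le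
  have c4 : |opNorm (x * R * z) * (n - opNorm R)| ≤ (opNorm x * (17 * n) * opNorm z) * d := by
    rw [abs_mul, abs_of_nonneg (opNorm_nonneg (x * R * z))]
    exact mul_le_mul b3 a4 (abs_nonneg _) (mul_nonneg (mul_nonneg hx h17) hz)
  rw [e]
  have hxz : 0 ≤ opNorm x * opNorm z := mul_nonneg hx hz
  have hfin : opNorm x * opNorm z * (d * n) ≤ opNorm x * opNorm z * 4 :=
    mul_le_mul_of_nonneg_left hdn hxz
  have t := (abs_sub _ _).trans (add_le_add ((abs_sub _ _).trans (add_le_add ((abs_add_le _ _).trans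
    (add_le_add c1 c2)) c3)) c4)
  refine t.trans ?_
  linarith

end Norms

/-! ### Quasi-multiplicativity of the norm along words -/

section Quasi

variable {ι : Type*}

lemma wordProd_cons (A : ι → SL2) (i : ι) (w : List ι) :
    wordProd A (i :: w) = A i * wordProd A w := by simp [wordProd]

lemma wordProd_append (A : ι → SL2) (u v : List ι) :
    wordProd A (u ++ v) = wordProd A u * wordProd A v := by simp [wordProd]

lemma wordProd_nil (A : ι → SL2) : wordProd A [] = 1 := by simp [wordProd]

/-- The norm `‖A_w‖` of the product along a word. -/
def wordNorm (A : ι → SL2) (w : List ι) : ℝ := opNorm (wordProd A w : Mat2)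

lemma wordNorm_pos (A : ι → SL2) (w : List ι) : 0 < wordNorm A w := opNorm_pos _

lemma wordNorm_nil (A : ι → SL2) : wordNorm A [] = 1 := by
  simp [wordNorm, wordProd_nil, opNorm_one]

lemma wordNorm_append_le (A : ι → SL2) (u v : List ι) :
    wordNorm A (u ++ v) ≤ wordNorm A u * wordNorm A v := by
  rw [wordNorm, wordProd_append, Matrix.SpecialLinearGroup.coe_mul]
  exact opNorm_mul_le _ _

/-- Uniform hyperbolicity with its constants, together with a bound `L` for the norms of the
letters. -/
structure HypData (A : ι → SL2) (c r L : ℝ) : Prop where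
  c_pos : 0 < c
  r_gt : 1 < r
  L_gt : 1 < L
  lower : ∀ w : List ι, c * r ^ w.length ≤ wordNorm A w
  upper : ∀ i, opNorm (A i : Mat2) ≤ L

lemma exists_hypData [Finite ι] {A : ι → SL2} (h : UniformlyHyperbolic A) :
    ∃ c r L, HypData A c r L := by
  obtain ⟨c, hc, r, hr, h⟩ := h
  obtain ⟨L, hL⟩ := (Set.finite_range fun i => opNorm (A i : Mat2)).bddAbove
  refine ⟨min c 1, r, max L 2, lt_min hc one_pos, hr, lt_max_of_lt_right (by norm_num), ?_, ?_⟩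
  · intro w
    rcases eq_or_ne w [] with rfl | hw
    · simp [wordNorm_nil]
    · exact (mul_le_mul_of_nonneg_right (min_le_left _ _) (by positivity)).trans (h w hw)
  · intro i
    exact (hL ⟨i, rfl⟩).trans (le_max_left _ _)

namespace HypData

variable {A : ι → SL2} {c r L : ℝ}

lemma wordNorm_cons_le (h : HypData A c r L) (i : ι) (w : List ι) :
    wordNorm A (i :: w) ≤ L * wordNorm A w := by
  rw [wordNorm, wordProd_cons, Matrix.SpecialLinearGroup.coe_mul]
  exact (opNorm_mul_le _ _).trans (mul_le_mul_of_nonneg_right (h.upper i) (opNorm_nonneg _))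

lemma wordNorm_le (h : HypData A c r L) (w : List ι) : wordNorm A w ≤ L ^ w.length := by
  induction w with
  | nil => simp [wordNorm_nil]
  | cons i w ih =>
    rw [List.length_cons, pow_succ']
    exact (h.wordNorm_cons_le i w).trans
      (mul_le_mul_of_nonneg_left ih (zero_le_one.trans h.L_gt.le))

end HypData

/-- The family of transposes, which turns statements on suffixes into statements on prefixes. -/
def transposeFamily (A : ι → SL2) : ι → SL2 := fun i => (A i).transpose

lemma wordProd_transposeFamily (A : ι → SL2) (w : List ι) :
    (wordProd (transposeFamily A) w.reverse : Mat2) = (wordProd A w : Mat2).transpose := by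
  induction w with
  | nil => simp [wordProd_nil]
  | cons i w ih =>
    rw [List.reverse_cons, wordProd_append, wordProd_cons A, Matrix.SpecialLinearGroup.coe_mul,
      Matrix.SpecialLinearGroup.coe_mul, Matrix.transpose_mul, ih]
    simp [wordProd, transposeFamily]

lemma wordNorm_transposeFamily (A : ι → SL2) (w : List ι) :
    wordNorm (transposeFamily A) w.reverse = wordNorm A w := by
  rw [wordNorm, wordProd_transposeFamily, opNorm_transpose, wordNorm]

lemma HypData.transpose {A : ι → SL2} {c r L : ℝ} (h : HypData A c r L) :
    HypData (transposeFamily A) c r L where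
  c_pos := h.c_pos
  r_gt := h.r_gt
  L_gt := h.L_gt
  lower w := by
    have := h.lower w.reverse
    rwa [← wordNorm_transposeFamily, List.reverse_reverse, List.length_reverse] at this
  upper i := by
    have : ((transposeFamily A i : SL2) : Mat2) = (A i : Mat2).transpose := rfl
    rw [this, opNorm_transpose]
    exact h.upper i

/-- The ratio `‖x y‖ / (‖x‖ ‖y‖)`; up to small errors it is the sine of the angle between the
direction most contracted by `x` and the direction most expanded by `y`. -/
def angle (x y : Mat2) : ℝ := opNorm (x * y) / (opNorm x * opNorm y)

lemma angle_nonneg (x y : Mat2) : 0 ≤ angle x y :=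
  div_nonneg (opNorm_nonneg _) (mul_nonneg (opNorm_nonneg _) (opNorm_nonneg _))

lemma angle_transpose (x y : Mat2) : angle y.transpose x.transpose = angle x y := by
  rw [angle, angle, ← Matrix.transpose_mul, opNorm_transpose, opNorm_transpose, opNorm_transpose,
    mul_comm (opNorm y)]

namespace HypData

variable {A : ι → SL2} {c r L : ℝ}

/-- Removing the first letter of a word changes the angle to any other matrix by
`O(‖A_w‖⁻²)`. -/
lemma angle_cons (h : HypData A c r L) (i : ι) (w : List ι) (M : SL2) :
    angle (wordProd A w : Mat2) M ≤
      angle (wordProd A (i :: w) : Mat2) M + 200 * L ^ 2 * (1 / wordNorm A (i :: w) ^ 2) := by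
  have hmid := (abs_le.mp (opNorm_middle (A i : Mat2) (M : Mat2) (wordProd A w))).2
  have hw := wordNorm_pos A w
  have hiw := wordNorm_pos A (i :: w)
  have hM := opNorm_pos M
  have hcons := h.wordNorm_cons_le i w
  have hAi := h.upper i
  have hL := h.L_gt
  have e1 : (wordProd A (i :: w) : Mat2) = (A i : Mat2) * (wordProd A w : Mat2) := by
    rw [wordProd_cons, Matrix.SpecialLinearGroup.coe_mul]
  rw [angle, angle]
  unfold wordNorm at *
  rw [← e1] at hmid
  set a := opNorm (wordProd A w : Mat2)
  set b := opNorm (wordProd A (i :: w) : Mat2)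
  set m := opNorm (M : Mat2)
  set X := opNorm ((wordProd A w : Mat2) * (M : Mat2))
  set Y := opNorm ((wordProd A (i :: w) : Mat2) * (M : Mat2))
  have h1 : b * X ≤ Y * a + 200 * (L * m) := by
    have := mul_le_mul_of_nonneg_right hAi hM.le
    linarith
  have h2 : X / (a * m) ≤ Y / (b * m) + 200 * L * (1 / (a * b)) := by
    have : Y / (b * m) + 200 * L * (1 / (a * b)) = (Y * a + 200 * (L * m)) / (b * (a * m)) := by
      field_simp
    rw [this, le_div_iff₀ (by positivity)]
    calc X / (a * m) * (b * (a * m)) = b * X := by field_simp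
      _ ≤ _ := h1
  refine h2.trans ?_
  have h3 : 1 / (a * b) ≤ L * (1 / b ^ 2) := by
    rw [mul_one_div, div_le_div_iff₀ (by positivity) (by positivity)]
    nlinarith
  nlinarith

lemma angle_suffix (h : HypData A c r L) (e : ℕ → ℝ) (u u' : List ι) (M : SL2)
    (he : ∀ t, t <:+ u → t ≠ [] →
      1 / wordNorm A (t ++ u') ^ 2 ≤ e (t ++ u').length) :
    angle (wordProd A u' : Mat2) M ≤ angle (wordProd A (u ++ u') : Mat2) M
      + 200 * L ^ 2 * ∑ j ∈ Finset.range u.length, e (u'.length + j + 1) := by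
  induction u with
  | nil => simp
  | cons i u ih =>
    have h1 := ih fun t ht => he t (ht.trans (List.suffix_cons i u))
    have h2 := h.angle_cons i (u ++ u') M
    have h3 := he (i :: u) List.suffix_rfl (by simp)
    have hL : 0 ≤ 200 * L ^ 2 := by positivity
    have h4 := mul_le_mul_of_nonneg_left h3 hL
    rw [List.length_cons, Finset.sum_range_succ, mul_add]
    have h5 : ((i :: u) ++ u').length = u'.length + u.length + 1 := by simp; omega
    rw [h5] at h4
    rw [List.cons_append] at h4 ⊢
    linarith

end HypData

/-- Every word has a longest suffix of norm at most `N`. -/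
lemma exists_longest_suffix (A : ι → SL2) {N : ℝ} (hN : 1 ≤ N) (w : List ι) :
    ∃ u u', w = u ++ u' ∧ wordNorm A u' ≤ N ∧
      ∀ t, t <:+ u → t ≠ [] → N < wordNorm A (t ++ u') := by
  induction w with
  | nil => exact ⟨[], [], rfl, by rwa [wordNorm_nil], fun t ht hne => absurd (by simpa using ht) hne⟩
  | cons i w ih =>
    by_cases hi : wordNorm A (i :: w) ≤ N
    · exact ⟨[], i :: w, rfl, hi, fun t ht hne => absurd (by simpa using ht) hne⟩
    · obtain ⟨u, u', rfl, h1, h2⟩ := ih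
      refine ⟨i :: u, u', rfl, h1, fun t ht hne => ?_⟩
      rcases List.suffix_cons_iff.mp ht with rfl | ht
      · exact not_le.mp hi
      · exact h2 t ht hne

namespace HypData

variable {A : ι → SL2} {c r L : ℝ}

/-- A word of norm larger than `L ^ (m + 1)` has a suffix of norm at most `L ^ (m + 1)`, of length
more than `m`, which makes almost the same angle with every matrix. The error is a sum of
`‖A_t‖⁻²` over longer suffixes `t`; there `‖A_t‖ ≥ L ^ (m + 1)` handles the lengths up to
`J (m + 1)`, and exponential growth handles the others. -/
lemma exists_suffix (h : HypData A c r L) {J : ℕ} (hJ : L ^ 2 ≤ r ^ J) (m : ℕ) (w : List ι)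
    (hw : L ^ (m + 1) < wordNorm A w) :
    ∃ u u', w = u ++ u' ∧ wordNorm A u' ≤ L ^ (m + 1) ∧ m ≤ u'.length ∧
      ∀ M : SL2, angle (wordProd A u' : Mat2) M ≤ angle (wordProd A w : Mat2) M
        + 200 * L ^ 2 * ((J * (m + 1) + (1 - r⁻¹)⁻¹ / c ^ 2) / (L ^ (m + 1)) ^ 2) := by
  have hL0 : 0 < L := one_pos.trans h.L_gt
  have hr0 : 0 < r := one_pos.trans h.r_gt
  have hc0 := h.c_pos
  obtain ⟨u, u', rfl, h1, h2⟩ := exists_longest_suffix A (one_le_pow₀ h.L_gt.le (n := m + 1)) w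
  refine ⟨u, u', rfl, h1, ?_, fun M => ?_⟩
  · rcases List.eq_nil_or_concat u with rfl | ⟨u₀, y, rfl⟩
    · simp at hw; linarith
    · have h3 := h2 [y] (by simp) (by simp)
      have h4 := h3.trans_le (h.wordNorm_le _)
      have := (pow_lt_pow_iff_right₀ h.L_gt).mp h4
      simp at this
      omega
  · set N := L ^ (m + 1) with hN
    have hN0 : 0 < N := by positivity
    let e : ℕ → ℝ := fun j => ((if j < J * (m + 1) then 1 else 0) + r⁻¹ ^ j / c ^ 2) / N ^ 2
    have he0 : ∀ j, 0 ≤ e j := fun j => by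
      have : (0:ℝ) ≤ if j < J * (m + 1) then 1 else 0 := by split_ifs <;> norm_num
      positivity
    have he : ∀ t, t <:+ u → t ≠ [] → 1 / wordNorm A (t ++ u') ^ 2 ≤ e (t ++ u').length := by
      intro t ht hne
      have h5 := h2 t ht hne
      have h6 := h.lower (t ++ u')
      generalize wordNorm A (t ++ u') = x at *
      generalize (t ++ u').length = j at *
      simp only [e]
      have hx : 0 < x := hN0.trans h5
      have hrj : 0 < r⁻¹ ^ j / c ^ 2 := by positivity
      rw [div_le_div_iff₀ (by positivity) (by positivity)]
      split_ifs with hj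
      · have : N ^ 2 ≤ x ^ 2 := by gcongr
        nlinarith [sq_nonneg x]
      · push Not at hj
        have h7 : N ^ 2 ≤ r ^ j := by
          calc N ^ 2 = (L ^ 2) ^ (m + 1) := by rw [hN, ← pow_mul, ← pow_mul, mul_comm]
            _ ≤ (r ^ J) ^ (m + 1) := by gcongr
            _ = r ^ (J * (m + 1)) := by rw [pow_mul]
            _ ≤ r ^ j := pow_le_pow_right₀ h.r_gt.le hj
        have h8 : (c * r ^ j) ^ 2 ≤ x ^ 2 := by gcongr
        have h9 : (0 + r⁻¹ ^ j / c ^ 2) * (c * r ^ j) ^ 2 = r ^ j := by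
          rw [zero_add, inv_pow]; field_simp
        calc 1 * N ^ 2 ≤ (0 + r⁻¹ ^ j / c ^ 2) * (c * r ^ j) ^ 2 := by rw [h9]; linarith
          _ ≤ _ := by gcongr
    refine (h.angle_suffix e u u' M he).trans ?_
    gcongr
    have hs : ∀ n, ∑ j ∈ Finset.range n, e j ≤ (J * (m + 1) + (1 - r⁻¹)⁻¹ / c ^ 2) / N ^ 2 := by
      intro n
      rw [← Finset.sum_div, Finset.sum_add_distrib, ← Finset.sum_div]
      gcongr
      · rw [Finset.sum_ite, Finset.sum_const_zero, add_zero, Finset.sum_const, nsmul_eq_mul, mul_one]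
        have : ((Finset.range n).filter (· < J * (m + 1))).card ≤ J * (m + 1) := by
          calc _ ≤ (Finset.range (J * (m + 1))).card := Finset.card_le_card fun x hx => by
                simp at hx ⊢; exact hx.2
            _ = _ := Finset.card_range _
        exact_mod_cast this
      · have hr1 : r⁻¹ < 1 := inv_lt_one_of_one_lt₀ h.r_gt
        have hr2 : 0 ≤ r⁻¹ := by positivity
        rw [← tsum_geometric_of_lt_one hr2 hr1]
        exact (summable_geometric_of_lt_one hr2 hr1).sum_le_tsum _ fun _ _ => by positivity
    refine le_trans ?_ (hs (u'.length + 1 + u.length))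
    rw [Finset.sum_range_add]
    have : ∀ j, e (u'.length + j + 1) = e (u'.length + 1 + j) := fun j => by congr 1; omega
    simp only [this]
    have := Finset.sum_nonneg fun j (_ : j ∈ Finset.range (u'.length + 1)) => he0 j
    linarith

/-- Norms are almost multiplicative along words. If `‖A_{uv}‖` were much smaller than
`‖A_u‖ ‖A_v‖`, one could cut a suffix of `u` and an initial part of `v` of the same prescribed norm whose
product has norm growing only linearly in the length, contradicting hyperbolicity. -/
lemma quasi_mul (h : HypData A c r L) :
    ∃ κ > 0, ∀ u v : List ι, κ * (wordNorm A u * wordNorm A v) ≤ wordNorm A (u ++ v) := by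
  have hL0 : 0 < L := one_pos.trans h.L_gt
  have hr0 : 0 < r := one_pos.trans h.r_gt
  have hc0 := h.c_pos
  obtain ⟨J, hJ⟩ := pow_unbounded_of_one_lt (L ^ 2) h.r_gt
  set K := (1 - r⁻¹)⁻¹ / c ^ 2 with hK
  obtain ⟨m, hm⟩ : ∃ m : ℕ, 1 + 400 * L ^ 2 * (J * (m + 1) + K) ≤ c * (r ^ 2) ^ m := by
    have hr2 : 1 < r ^ 2 := one_lt_pow₀ h.r_gt (by norm_num)
    have t1 : Tendsto (fun m : ℕ => ((m : ℝ) ^ 1) / (r ^ 2) ^ m) atTop (𝓝 0) :=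
      tendsto_pow_const_div_const_pow_of_one_lt 1 hr2
    have t0 : Tendsto (fun m : ℕ => ((m : ℝ) ^ 0) / (r ^ 2) ^ m) atTop (𝓝 0) :=
      tendsto_pow_const_div_const_pow_of_one_lt 0 hr2
    have t := (t0.const_mul (1 + 400 * L ^ 2 * (J + K))).add (t1.const_mul (400 * L ^ 2 * J))
    rw [mul_zero, mul_zero, add_zero] at t
    obtain ⟨m, hm⟩ := (t.eventually (gt_mem_nhds hc0)).exists
    refine ⟨m, ?_⟩
    have hp : 0 < (r ^ 2) ^ m := by positivity
    have : ((1 + 400 * L ^ 2 * (J + K)) + 400 * L ^ 2 * J * m) / (r ^ 2) ^ m < c := by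
      refine lt_of_eq_of_lt ?_ hm
      rw [pow_zero, pow_one]; ring
    rw [div_lt_iff₀ hp] at this
    linarith
  set N := L ^ (m + 1) with hN
  have hN0 : 0 < N := by positivity
  refine ⟨1 / (4 * N ^ 2), by positivity, fun u v => ?_⟩
  have hu := wordNorm_pos A u
  have hv := wordNorm_pos A v
  have huv := wordNorm_pos A (u ++ v)
  have hprod : wordProd A (u ++ v) = wordProd A u * wordProd A v := wordProd_append A u v
  rw [one_div, inv_mul_le_iff₀ (by positivity)]
  by_cases hu1 : wordNorm A u ≤ N
  · have h1 := opNorm_le_mul_inv (wordProd A u) (wordProd A v)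
    rw [← hprod] at h1
    change wordNorm A v ≤ 4 * wordNorm A u * wordNorm A (u ++ v) at h1
    calc wordNorm A u * wordNorm A v
        ≤ wordNorm A u * (4 * wordNorm A u * wordNorm A (u ++ v)) := by gcongr
      _ = 4 * wordNorm A u ^ 2 * wordNorm A (u ++ v) := by ring
      _ ≤ _ := by gcongr
  by_cases hv1 : wordNorm A v ≤ N
  · have h1 : wordNorm A u ≤ wordNorm A (u ++ v) * (4 * wordNorm A v) := by
      have h2 := opNorm_mul_le ((wordProd A u * wordProd A v : SL2) : Mat2)
        (((wordProd A v)⁻¹ : SL2) : Mat2)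
      rw [← Matrix.SpecialLinearGroup.coe_mul, mul_inv_cancel_right, ← hprod] at h2
      exact h2.trans (mul_le_mul_of_nonneg_left (opNorm_inv_le _) (opNorm_nonneg _))
    calc wordNorm A u * wordNorm A v
        ≤ (wordNorm A (u ++ v) * (4 * wordNorm A v)) * wordNorm A v := by gcongr
      _ = 4 * wordNorm A v ^ 2 * wordNorm A (u ++ v) := by ring
      _ ≤ _ := by gcongr
  push Not at hu1 hv1
  obtain ⟨u₁, u₂, hu₁, hu₂, hu₃, hu₄⟩ := h.exists_suffix hJ.le m u hu1
  obtain ⟨v₁, v₂, hv₁, hv₂, hv₃, hv₄⟩ := h.transpose.exists_suffix hJ.le m v.reverse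
    (by rwa [wordNorm_transposeFamily])
  obtain ⟨v₃, rfl⟩ : ∃ v₃ : List ι, v₂ = v₃.reverse := ⟨v₂.reverse, by simp⟩
  rw [wordNorm_transposeFamily] at hv₂
  rw [List.length_reverse] at hv₃
  have a1 := hu₄ (wordProd A v)
  have a2 := hv₄ (wordProd A u₂).transpose
  have hcoe : (((wordProd A u₂).transpose : SL2) : Mat2) = (wordProd A u₂ : Mat2).transpose := rfl
  rw [wordProd_transposeFamily, wordProd_transposeFamily, hcoe, angle_transpose,
    angle_transpose] at a2
  have hlow := h.lower (u₂ ++ v₃)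
  have hlow2 : c * (r ^ 2) ^ m ≤ wordNorm A (u₂ ++ v₃) := by
    refine le_trans ?_ hlow
    rw [← pow_mul, List.length_append]
    gcongr
    · exact h.r_gt.le
    · omega
  have hang : wordNorm A (u₂ ++ v₃) =
      angle (wordProd A u₂ : Mat2) (wordProd A v₃ : Mat2) * (wordNorm A u₂ * wordNorm A v₃) := by
    have p1 := wordNorm_pos A u₂
    have p2 := wordNorm_pos A v₃
    rw [angle, ← Matrix.SpecialLinearGroup.coe_mul, ← wordProd_append]
    exact (div_mul_cancel₀ _ (mul_pos p1 p2).ne').symm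
  have hang2 : angle (wordProd A u : Mat2) (wordProd A v : Mat2)
      = wordNorm A (u ++ v) / (wordNorm A u * wordNorm A v) := by
    rw [angle, ← Matrix.SpecialLinearGroup.coe_mul, ← wordProd_append]; rfl
  have hub : wordNorm A (u₂ ++ v₃) ≤
      angle (wordProd A u₂ : Mat2) (wordProd A v₃ : Mat2) * N ^ 2 := by
    rw [hang, sq]
    exact mul_le_mul_of_nonneg_left (mul_le_mul hu₂ hv₂ (wordNorm_pos A v₃).le hN0.le)
      (angle_nonneg _ _)
  set E := (J * (m + 1) + K) / N ^ 2 with hE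
  have hEN : E * N ^ 2 = J * (m + 1) + K := div_mul_cancel₀ _ (by positivity)
  have a3 : angle (wordProd A u₂ : Mat2) (wordProd A v₃ : Mat2) * N ^ 2 ≤
      (angle (wordProd A u : Mat2) (wordProd A v : Mat2) + 400 * L ^ 2 * E) * N ^ 2 :=
    mul_le_mul_of_nonneg_right (by linarith) (by positivity)
  have a4 : 1 ≤ angle (wordProd A u : Mat2) (wordProd A v : Mat2) * N ^ 2 := by
    have : 400 * L ^ 2 * E * N ^ 2 = 400 * L ^ 2 * (J * (m + 1) + K) := by rw [mul_assoc, hEN]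
    linarith
  rw [hang2, div_mul_eq_mul_div, le_div_iff₀ (by positivity)] at a4
  linarith [mul_pos huv (pow_pos hN0 2)]

end HypData

end Quasi

/-! ### The geometric potential -/

section Potential

variable {ι : Type*}

/-- The potential `φ_i(w) = log (‖A_{iw}‖² / ‖A_w‖²)` on finite words. -/
def phi (A : ι → SL2) (i : ι) (w : List ι) : ℝ :=
  2 * Real.log (wordNorm A (i :: w) / wordNorm A w)

lemma exp_mul_phi (A : ι → SL2) (i : ι) (w : List ι) (s : ℝ) :
    Real.exp (s * phi A i w) = (wordNorm A (i :: w) / wordNorm A w) ^ (2 * s) := by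
  rw [Real.rpow_def_of_pos (div_pos (wordNorm_pos _ _) (wordNorm_pos _ _)), phi]
  ring_nf

lemma abs_log_sub_log_le {a b m : ℝ} (hm : 0 < m) (ha : m ≤ a) (hb : m ≤ b) :
    |Real.log a - Real.log b| ≤ |a - b| / m := by
  have key : ∀ {a b : ℝ}, m ≤ a → m ≤ b → Real.log a - Real.log b ≤ |a - b| / m := by
    intro a b ha hb
    have ha0 := hm.trans_le ha
    have hb0 := hm.trans_le hb
    rw [← Real.log_div ha0.ne' hb0.ne']
    refine (Real.log_le_sub_one_of_pos (div_pos ha0 hb0)).trans ?_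
    have : a / b - 1 = (a - b) / b := by field_simp
    rw [this]
    exact (div_le_div_of_nonneg_right (le_abs_self _) hb0.le).trans
      (div_le_div_of_nonneg_left (abs_nonneg _) hm hb)
  rw [abs_le]
  have h1 := key ha hb
  have h2 := key hb ha
  rw [abs_sub_comm] at h2
  constructor <;> linarith

/-- The potential depends exponentially little on the far part of the word. -/
lemma HypData.exists_phi_holder {A : ι → SL2} {c r L : ℝ} (h : HypData A c r L) :
    ∃ C > 0, ∃ θ ∈ Set.Ioo (0 : ℝ) 1, ∀ i b w w',
      |phi A i (b ++ w) - phi A i (b ++ w')| ≤ C * θ ^ b.length := by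
  obtain ⟨κ, hκ, hq⟩ := h.quasi_mul
  have hL0 : 0 < L := one_pos.trans h.L_gt
  have hr0 : 0 < r := one_pos.trans h.r_gt
  have hc0 := h.c_pos
  have hEl : ∀ i w, 1 / (4 * L) ≤ wordNorm A (i :: w) / wordNorm A w := by
    intro i w
    rw [div_le_div_iff₀ (by positivity) (wordNorm_pos _ _), one_mul]
    have h1 := opNorm_le_mul_inv (A i) (wordProd A w)
    rw [← wordProd_cons] at h1
    calc wordNorm A w ≤ 4 * opNorm (A i : Mat2) * wordNorm A (i :: w) := h1
      _ ≤ 4 * L * wordNorm A (i :: w) := by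
          gcongr
          · exact (wordNorm_pos _ _).le
          · exact h.upper i
      _ = _ := by ring
  set θ : ℝ := (r ^ 2)⁻¹ with hθ
  set C₁ : ℝ := 200 * L / (κ * c ^ 2) with hC₁
  have hE : ∀ i b w, |wordNorm A (i :: (b ++ w)) / wordNorm A (b ++ w)
      - wordNorm A (i :: b) / wordNorm A b| ≤ C₁ * θ ^ b.length := by
    intro i b w
    have h1 := opNorm_middle (A i : Mat2) (wordProd A w : Mat2) (wordProd A b)
    simp only [← Matrix.SpecialLinearGroup.coe_mul, ← wordProd_cons, ← wordProd_append] at h1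
    change |wordNorm A (i :: b) * wordNorm A (b ++ w) - wordNorm A (i :: b ++ w) * wordNorm A b|
      ≤ 200 * (opNorm (A i : Mat2) * wordNorm A w) at h1
    have hb := wordNorm_pos A b
    have hbw := wordNorm_pos A (b ++ w)
    have hw := wordNorm_pos A w
    have e : wordNorm A (i :: (b ++ w)) / wordNorm A (b ++ w) - wordNorm A (i :: b) / wordNorm A b
        = -((wordNorm A (i :: b) * wordNorm A (b ++ w) - wordNorm A (i :: b ++ w) * wordNorm A b)
          / (wordNorm A b * wordNorm A (b ++ w))) := by
      rw [List.cons_append]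
      field_simp
      ring
    rw [e, abs_neg, abs_div, abs_of_pos (mul_pos hb hbw), div_le_iff₀ (mul_pos hb hbw)]
    refine h1.trans ?_
    have h2 := hq b w
    have h3 : c ^ 2 ≤ θ ^ b.length * wordNorm A b ^ 2 := by
      have h4 : (c * r ^ b.length) ^ 2 ≤ wordNorm A b ^ 2 := by
        gcongr
        exact h.lower b
      have h5 : 0 < (r ^ 2) ^ b.length := by positivity
      rw [hθ, inv_pow, ← div_eq_inv_mul, le_div_iff₀ h5]
      calc c ^ 2 * (r ^ 2) ^ b.length = (c * r ^ b.length) ^ 2 := by ring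
        _ ≤ _ := h4
    have hθ0 : 0 < θ ^ b.length := by positivity
    have h6 := h.upper i
    have h7 : κ * c ^ 2 * wordNorm A w ≤ θ ^ b.length * (wordNorm A b * wordNorm A (b ++ w)) := by
      calc κ * c ^ 2 * wordNorm A w ≤ κ * (θ ^ b.length * wordNorm A b ^ 2) * wordNorm A w := by
            gcongr
        _ = θ ^ b.length * wordNorm A b * (κ * (wordNorm A b * wordNorm A w)) := by ring
        _ ≤ θ ^ b.length * wordNorm A b * wordNorm A (b ++ w) :=
            mul_le_mul_of_nonneg_left h2 (mul_pos hθ0 hb).le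
        _ = _ := by ring
    have h8 : wordNorm A w ≤ θ ^ b.length * (wordNorm A b * wordNorm A (b ++ w)) / (κ * c ^ 2) := by
      rw [le_div_iff₀ (by positivity)]
      linarith
    calc 200 * (opNorm (A i : Mat2) * wordNorm A w)
        ≤ 200 * (L * (θ ^ b.length * (wordNorm A b * wordNorm A (b ++ w)) / (κ * c ^ 2))) := by
          gcongr
      _ = _ := by rw [hC₁]; ring
  have hφ : ∀ i b w, |phi A i (b ++ w) - phi A i b| ≤ 2 * (C₁ * (4 * L)) * θ ^ b.length := by
    intro i b w
    rw [phi, phi, ← mul_sub, abs_mul, abs_two, mul_assoc]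
    gcongr
    refine (abs_log_sub_log_le (m := 1 / (4 * L)) (by positivity) (hEl _ _) (hEl _ _)).trans ?_
    rw [div_div_eq_mul_div, div_one]
    calc _ ≤ C₁ * θ ^ b.length * (4 * L) := by gcongr; exact hE i b w
      _ = _ := by ring
  refine ⟨2 * (2 * (C₁ * (4 * L))), by positivity, θ, ⟨by positivity, ?_⟩, fun i b w w' => ?_⟩
  · exact inv_lt_one_of_one_lt₀ (one_lt_pow₀ h.r_gt (by norm_num))
  · have h1 := abs_le.mp (hφ i b w)
    have h2 := abs_le.mp (hφ i b w')
    rw [abs_le]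
    constructor <;> linarith

end Potential

/-! ### Log-Hölder functions on words and the contraction of Markov averages -/

section Contraction

variable {ι : Type*}

/-- `f` is log-Hölder: changing a word beyond a common beginning of length `n` changes `f` by a factor
at most `exp (K θⁿ)`. -/
def LogHolder (θ K : ℝ) (f : List ι → ℝ) : Prop :=
  ∀ b w w', f (b ++ w) ≤ Real.exp (K * θ ^ b.length) * f (b ++ w')

namespace LogHolder

variable {θ K K' : ℝ} {f g : List ι → ℝ}

lemma mono (hf : LogHolder θ K f) (hθ : 0 ≤ θ) (h0 : ∀ w, 0 ≤ f w) (h : K ≤ K') :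
    LogHolder θ K' f := fun b w w' => (hf b w w').trans (by
  have := h0 (b ++ w')
  gcongr)

lemma const (hθ : 0 ≤ θ) (hK : 0 ≤ K) {a : ℝ} (ha : 0 ≤ a) :
    LogHolder θ K (fun _ : List ι => a) := fun _ _ _ =>
  le_mul_of_one_le_left ha (Real.one_le_exp (mul_nonneg hK (pow_nonneg hθ _)))

lemma mul (hf : LogHolder θ K f) (hg : LogHolder θ K' g) (f0 : ∀ w, 0 ≤ f w)
    (g0 : ∀ w, 0 ≤ g w) : LogHolder θ (K + K') (fun w => f w * g w) := fun b w w' => by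
  have := mul_le_mul (hf b w w') (hg b w w') (g0 _) (mul_nonneg (Real.exp_pos _).le (f0 _))
  refine this.trans_eq ?_
  rw [add_mul, Real.exp_add]
  ring

lemma div (hf : LogHolder θ K f) (hg : LogHolder θ K' g) (f0 : ∀ w, 0 ≤ f w)
    (g0 : ∀ w, 0 < g w) : LogHolder θ (K + K') (fun w => f w / g w) := fun b w w' => by
  have h1 := mul_le_mul (hf b w w') (hg b w' w) (g0 _).le (mul_nonneg (Real.exp_pos _).le (f0 _))
  change f (b ++ w) / g (b ++ w) ≤ _ * (f (b ++ w') / g (b ++ w'))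
  rw [← mul_div_assoc, div_le_div_iff₀ (g0 _) (g0 _)]
  refine h1.trans_eq ?_
  rw [add_mul, Real.exp_add]
  ring

lemma cons (hf : LogHolder θ K f) (i : ι) : LogHolder θ (K * θ) (fun w => f (i :: w)) :=
  fun b w w' => by
    have := hf (i :: b) w w'
    rw [List.length_cons, pow_succ'] at this
    rwa [mul_assoc]

lemma sum {κ : Type*} (s : Finset κ) {F : κ → List ι → ℝ} (h : ∀ i ∈ s, LogHolder θ K (F i)) :
    LogHolder θ K (fun w => ∑ i ∈ s, F i w) := fun b w w' => by
  rw [Finset.mul_sum]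
  exact Finset.sum_le_sum fun i hi => h i hi b w w'

end LogHolder

/-- Weights `D n ≍ θⁿ` measuring oscillations on cylinders of depth `n`, for which a coupling that
succeeds with probability `t ≥ exp (-K θⁿ)` contracts by a fixed factor `ρ`. -/
lemma exists_weights {θ K : ℝ} (hθ : θ ∈ Set.Ioo (0 : ℝ) 1) (hK : 0 ≤ K) :
    ∃ D : ℕ → ℝ, ∃ ρ ∈ Set.Ioo (0 : ℝ) 1, ∃ c₁ > 0, ∃ c₂ > 0,
      (∀ n, D n ≤ 1) ∧ (∀ n, c₁ * θ ^ n ≤ D n) ∧ (∀ n, D n ≤ c₂ * θ ^ n) ∧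
      ∀ n t, Real.exp (-(K * θ ^ n)) ≤ t → t ≤ 1 → t * D (n + 1) + (1 - t) ≤ ρ * D n := by
  obtain ⟨hθ0, hθ1⟩ := hθ
  obtain ⟨N, hN⟩ : ∃ N : ℕ, K * θ ^ N ≤ (1 - θ) / 4 := by
    have t := (tendsto_pow_atTop_nhds_zero_of_lt_one hθ0.le hθ1).const_mul K
    rw [mul_zero] at t
    exact (t.eventually (ge_mem_nhds (by linarith))).exists
  set δ := Real.exp (-K) with hδ
  have hδ0 : 0 < δ := Real.exp_pos _
  have hδ1 : δ ≤ 1 := Real.exp_le_one_iff.mpr (by linarith)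
  have hx : ∀ m : ℕ, 0 < (δ / 2) ^ m := fun m => by positivity
  have hx1 : ∀ m : ℕ, (δ / 2) ^ m ≤ 1 := fun m => pow_le_one₀ (by positivity) (by linarith)
  set D : ℕ → ℝ := fun n => if N ≤ n then θ ^ (n - N) / 2 else 1 - (δ / 2) ^ (N - n) / 2 with hD
  have hθp : ∀ m : ℕ, 0 < θ ^ m := fun m => by positivity
  have hθp1 : ∀ m : ℕ, θ ^ m ≤ 1 := fun m => pow_le_one₀ hθ0.le hθ1.le
  refine ⟨D, max ((1 + θ) / 2) (1 - (δ / 2) ^ N / 2), ⟨lt_max_of_lt_left (by linarith),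
    max_lt (by linarith) (by linarith [hx N])⟩, 1 / 2, by norm_num, 1 / θ ^ N,
    by positivity, ?_, ?_, ?_, ?_⟩
  · intro n
    simp only [hD]
    split_ifs
    · linarith [hθp1 (n - N)]
    · linarith [hx (N - n)]
  · intro n
    simp only [hD]
    split_ifs with h
    · have : θ ^ n ≤ θ ^ (n - N) := pow_le_pow_of_le_one hθ0.le hθ1.le (Nat.sub_le _ _)
      linarith
    · linarith [hx1 (N - n), hθp1 n]
  · intro n
    rw [one_div, ← div_eq_inv_mul, le_div_iff₀ (hθp N)]
    simp only [hD]
    split_ifs with h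
    · rw [div_mul_eq_mul_div, ← pow_add, Nat.sub_add_cancel h]
      linarith [hθp n]
    · have h1 : θ ^ N ≤ θ ^ n := pow_le_pow_of_le_one hθ0.le hθ1.le (by omega)
      nlinarith [hx (N - n), hθp N]
  · intro n t ht ht1
    simp only [hD]
    by_cases h : N ≤ n
    · rw [if_pos h, if_pos (by omega)]
      have e1 : n + 1 - N = (n - N) + 1 := by omega
      have ht0 : 1 - K * θ ^ n ≤ t := by
        linarith [Real.add_one_le_exp (-(K * θ ^ n))]
      have e2 : θ ^ n = θ ^ (n - N) * θ ^ N := by rw [← pow_add, Nat.sub_add_cancel h]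
      have h3 : K * θ ^ n ≤ (1 - θ) / 4 * θ ^ (n - N) := by
        rw [e2]; nlinarith [hθp (n - N)]
      have h4 : (1 + θ) / 2 * (θ ^ (n - N) / 2) ≤
          max ((1 + θ) / 2) (1 - (δ / 2) ^ N / 2) * (θ ^ (n - N) / 2) := by
        gcongr
        exact le_max_left _ _
      refine le_trans ?_ h4
      rw [e1, pow_succ]
      have h5 : t * (θ ^ (n - N) * θ / 2) ≤ 1 * (θ ^ (n - N) * θ / 2) := by
        gcongr
      linarith
    · rw [if_neg h]
      have h1 : (if N ≤ n + 1 then θ ^ (n + 1 - N) / 2 else 1 - (δ / 2) ^ (N - (n + 1)) / 2)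
          = 1 - (δ / 2) ^ (N - (n + 1)) / 2 := by
        split_ifs with h2
        · have : n + 1 = N := by omega
          rw [this]; norm_num
        · rfl
      rw [h1]
      have e1 : N - n = N - (n + 1) + 1 := by omega
      have hy := hx (N - (n + 1))
      have hdt : δ ≤ t := le_trans (Real.exp_le_exp.mpr (by nlinarith [hθp1 n])) ht
      have h2 : (δ / 2) ^ N ≤ (δ / 2) ^ (N - n) :=
        pow_le_pow_of_le_one (by positivity) (by linarith) (Nat.sub_le _ _)
      have h3 : (1 - (δ / 2) ^ (N - n) / 2) * (1 - (δ / 2) ^ (N - n) / 2) ≤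
          max ((1 + θ) / 2) (1 - (δ / 2) ^ N / 2) * (1 - (δ / 2) ^ (N - n) / 2) := by
        apply mul_le_mul_of_nonneg_right
        · exact le_max_of_le_right (by linarith)
        · linarith [hx1 (N - n)]
      refine le_trans ?_ h3
      have e2 : (δ / 2) ^ (N - n) = (δ / 2) ^ (N - (n + 1)) * (δ / 2) := by rw [e1, pow_succ]
      have h4 : δ * (δ / 2) ^ (N - (n + 1)) ≤ t * (δ / 2) ^ (N - (n + 1)) := by gcongr
      nlinarith [sq_nonneg ((δ / 2) ^ (N - n))]

/-- `f` oscillates by at most `V * D n` on cylinders of depth `n`. -/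
def OscBound (D : ℕ → ℝ) (V : ℝ) (f : List ι → ℝ) : Prop :=
  ∀ b w w', |f (b ++ w) - f (b ++ w')| ≤ V * D b.length

variable [Fintype ι]

/-- The average `w ↦ Σ_i π_i(w) f(iw)`. -/
def avg (π : ι → List ι → ℝ) (f : List ι → ℝ) : List ι → ℝ := fun w => ∑ i, π i w * f (i :: w)

/-- A family of transition weights which are log-Hölder. -/
structure Transition (θ K : ℝ) (π : ι → List ι → ℝ) : Prop where
  nonneg : ∀ i w, 0 ≤ π i w
  sum_eq : ∀ w, ∑ i, π i w = 1
  holder : ∀ i, LogHolder θ K (π i)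

/-- Averaging contracts oscillations: couple the two transition laws maximally. -/
lemma OscBound.avg {θ K ρ : ℝ} {D : ℕ → ℝ} {π : ι → List ι → ℝ} (hπ : Transition θ K π)
    (hD1 : ∀ n, D n ≤ 1)
    (hD : ∀ n t, Real.exp (-(K * θ ^ n)) ≤ t → t ≤ 1 → t * D (n + 1) + (1 - t) ≤ ρ * D n)
    {V : ℝ} (hV : 0 ≤ V) {f : List ι → ℝ} (hf : OscBound D V f) :
    OscBound D (ρ * V) (avg π f) := by
  have key : ∀ b w w', Paper.avg π f (b ++ w) - Paper.avg π f (b ++ w') ≤ ρ * V * D b.length := by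
    intro b w w'
    set x := b ++ w with hx
    set y := b ++ w' with hy
    set T := ∑ i, min (π i x) (π i y) with hT
    have hne : (Finset.univ : Finset ι).Nonempty := by
      by_contra h
      rw [Finset.not_nonempty_iff_eq_empty] at h
      have := hπ.sum_eq []
      rw [h] at this
      simp at this
    obtain ⟨j, -, hj⟩ := Finset.exists_min_image Finset.univ (fun i => f (i :: y)) hne
    have hT1 : T ≤ 1 := by
      rw [← hπ.sum_eq x]
      exact Finset.sum_le_sum fun i _ => min_le_left _ _
    have hTe : Real.exp (-(K * θ ^ b.length)) ≤ T := by
      rw [← mul_one (Real.exp _), ← hπ.sum_eq y, Finset.mul_sum]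
      refine Finset.sum_le_sum fun i _ => le_min ?_ ?_
      · have := hπ.holder i b w' w
        rw [Real.exp_neg, inv_mul_le_iff₀ (Real.exp_pos _)]
        exact this
      · have := hπ.holder i b w' w'
        rw [Real.exp_neg, inv_mul_le_iff₀ (Real.exp_pos _)]
        exact this
    have h1 : ∑ i, min (π i x) (π i y) * (f (i :: x) - f (i :: y)) ≤ T * (V * D (b.length + 1)) := by
      rw [hT, Finset.sum_mul]
      refine Finset.sum_le_sum fun i _ => mul_le_mul_of_nonneg_left ?_
        (le_min (hπ.nonneg _ _) (hπ.nonneg _ _))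
      exact (le_abs_self _).trans (hf (i :: b) w w')
    have h2 : ∑ i, (π i x - min (π i x) (π i y)) * f (i :: x) ≤ (1 - T) * (f (j :: y) + V) := by
      rw [hT, ← hπ.sum_eq x, ← Finset.sum_sub_distrib, Finset.sum_mul]
      refine Finset.sum_le_sum fun i _ => mul_le_mul_of_nonneg_left ?_
        (sub_nonneg.mpr (min_le_left _ _))
      have h3 := (le_abs_self _).trans (hf [] (i :: x) (j :: y))
      have h4 : V * D 0 ≤ V * 1 := mul_le_mul_of_nonneg_left (hD1 0) hV
      simp only [List.nil_append, List.length_nil] at h3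
      linarith
    have h3 : (1 - T) * f (j :: y) ≤ ∑ i, (π i y - min (π i x) (π i y)) * f (i :: y) := by
      rw [hT, ← hπ.sum_eq y, ← Finset.sum_sub_distrib, Finset.sum_mul]
      exact Finset.sum_le_sum fun i hi => mul_le_mul_of_nonneg_left (hj i hi)
        (sub_nonneg.mpr (min_le_right _ _))
    have h4 : Paper.avg π f x - Paper.avg π f y =
        ∑ i, min (π i x) (π i y) * (f (i :: x) - f (i :: y))
        + ∑ i, (π i x - min (π i x) (π i y)) * f (i :: x)
        - ∑ i, (π i y - min (π i x) (π i y)) * f (i :: y) := by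
      rw [Paper.avg, Paper.avg, ← Finset.sum_sub_distrib, ← Finset.sum_add_distrib,
        ← Finset.sum_sub_distrib]
      exact Finset.sum_congr rfl fun i _ => by ring
    have h5 := mul_le_mul_of_nonneg_left (hD b.length T hTe hT1) hV
    rw [h4]
    linarith
  intro b w w'
  rw [abs_le]
  constructor <;> linarith [key b w w', key b w' w]

lemma abs_avg_sub_le {θ K V : ℝ} {D : ℕ → ℝ} {π : ι → List ι → ℝ} (hπ : Transition θ K π)
    (hD1 : ∀ n, D n ≤ 1) (hV : 0 ≤ V) {f : List ι → ℝ} (hf : OscBound D V f) (w : List ι) :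
    |avg π f w - f w| ≤ V := by
  have : avg π f w - f w = ∑ i, π i w * (f (i :: w) - f w) := by
    simp only [mul_sub, Finset.sum_sub_distrib, ← Finset.sum_mul, hπ.sum_eq, one_mul, avg]
  rw [this]
  refine (Finset.abs_sum_le_sum_abs _ _).trans ?_
  calc _ ≤ ∑ i, π i w * V := by
        refine Finset.sum_le_sum fun i _ => ?_
        rw [abs_mul, abs_of_nonneg (hπ.nonneg _ _)]
        refine mul_le_mul_of_nonneg_left ?_ (hπ.nonneg _ _)
        exact (hf [] (i :: w) w).trans (mul_le_of_le_one_right hV (hD1 _))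
    _ = V := by rw [← Finset.sum_mul, hπ.sum_eq, one_mul]

lemma le_avg {θ K m : ℝ} {π : ι → List ι → ℝ} (hπ : Transition θ K π)
    {f : List ι → ℝ} (hf : ∀ w, m ≤ f w) (w : List ι) : m ≤ avg π f w := by
  rw [← one_mul m, ← hπ.sum_eq w, Finset.sum_mul]
  exact Finset.sum_le_sum fun i _ => mul_le_mul_of_nonneg_left (hf _) (hπ.nonneg _ _)

end Contraction

/-! ### Iterates of the transfer operator and the pressure -/

section Iterates

variable {ι : Type*} [Fintype ι]

/-- The iterates `L_ψⁿ 1` of the transfer operator `L_ψ f (w) = Σ_i ψ_i(w) f(iw)`, which is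
`avg ψ`. -/
def iter (ψ : ι → List ι → ℝ) (n : ℕ) : List ι → ℝ := (avg ψ)^[n] (fun _ => 1)

lemma iter_zero (ψ : ι → List ι → ℝ) : iter ψ 0 = fun _ => 1 := rfl

lemma iter_succ (ψ : ι → List ι → ℝ) (n : ℕ) (w : List ι) :
    iter ψ (n + 1) w = ∑ i, ψ i w * iter ψ n (i :: w) := by
  rw [iter, Function.iterate_succ_apply']
  rfl

/-- A positive log-Hölder potential `ψ = exp(φ)`. -/
structure Potential (θ K : ℝ) (ψ : ι → List ι → ℝ) : Prop where
  theta : θ ∈ Set.Ioo (0 : ℝ) 1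
  K_nonneg : 0 ≤ K
  pos : ∀ i w, 0 < ψ i w
  holder : ∀ i, LogHolder θ K (ψ i)

namespace Potential

variable [Nonempty ι] {θ K : ℝ} {ψ : ι → List ι → ℝ}

lemma iter_pos (hψ : Potential θ K ψ) (n : ℕ) (w : List ι) : 0 < iter ψ n w := by
  induction n generalizing w with
  | zero => rw [iter_zero]; exact one_pos
  | succ n ih =>
    rw [iter_succ]
    exact Finset.sum_pos (fun i _ => mul_pos (hψ.pos i w) (ih _)) Finset.univ_nonempty

lemma iter_holder (hψ : Potential θ K ψ) (n : ℕ) : LogHolder θ (K / (1 - θ)) (iter ψ n) := by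
  have h1 : 0 < 1 - θ := by linarith [hψ.theta.2]
  have hK : 0 ≤ K / (1 - θ) := div_nonneg hψ.K_nonneg h1.le
  induction n with
  | zero => rw [iter_zero]; exact LogHolder.const hψ.theta.1.le hK zero_le_one
  | succ n ih =>
    have e : iter ψ (n + 1) = fun w => ∑ i, ψ i w * iter ψ n (i :: w) :=
      funext fun w => iter_succ ψ n w
    have e2 : K / (1 - θ) = K + K / (1 - θ) * θ := by field_simp; ring
    rw [e, e2]
    exact LogHolder.sum _ fun i _ => (hψ.holder i).mul (ih.cons i) (fun w => (hψ.pos i w).le)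
      fun w => (hψ.iter_pos n _).le

/-- The ratio `L_ψⁿ⁺¹ 1 / L_ψⁿ 1`. -/
def _root_.Paper.ratio (ψ : ι → List ι → ℝ) (n : ℕ) (w : List ι) : ℝ :=
  iter ψ (n + 1) w / iter ψ n w

lemma ratio_pos (hψ : Potential θ K ψ) (n : ℕ) (w : List ι) : 0 < ratio ψ n w :=
  div_pos (hψ.iter_pos _ _) (hψ.iter_pos _ _)

/-- Normalising a potential by a positive log-Hölder function gives transition weights. -/
lemma transition (hψ : Potential θ K ψ) {f g : List ι → ℝ} {K' : ℝ} (hf : LogHolder θ K' f)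
    (hg : LogHolder θ K' g) (f0 : ∀ w, 0 < f w) (g0 : ∀ w, 0 < g w)
    (hfg : ∀ w, ∑ i, ψ i w * f (i :: w) = g w) :
    Transition θ (K + K' * θ + K') (fun i w => ψ i w * f (i :: w) / g w) where
  nonneg i w := (div_pos (mul_pos (hψ.pos _ _) (f0 _)) (g0 _)).le
  sum_eq w := by rw [← Finset.sum_div, hfg, div_self (g0 w).ne']
  holder i := ((hψ.holder i).mul (hf.cons i) (fun w => (hψ.pos i w).le) fun w => (f0 _).le).div hg
    (fun w => (mul_pos (hψ.pos _ _) (f0 _)).le) g0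

lemma transition_iter (hψ : Potential θ K ψ) (n : ℕ) :
    Transition θ (K + K / (1 - θ) * θ + K / (1 - θ))
      (fun i w => ψ i w * iter ψ n (i :: w) / iter ψ (n + 1) w) :=
  hψ.transition (hψ.iter_holder n) (hψ.iter_holder (n + 1)) (hψ.iter_pos n) (hψ.iter_pos (n + 1))
    fun w => (iter_succ ψ n w).symm

lemma ratio_succ (hψ : Potential θ K ψ) (n : ℕ) :
    ratio ψ (n + 1) =
      avg (fun i w => ψ i w * iter ψ n (i :: w) / iter ψ (n + 1) w) (ratio ψ n) := by
  funext w
  rw [ratio, iter_succ, Finset.sum_div, avg]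
  refine Finset.sum_congr rfl fun i _ => ?_
  have h1 := (hψ.iter_pos n (i :: w)).ne'
  have h2 := (hψ.iter_pos (n + 1) w).ne'
  rw [ratio]
  field_simp

/-- The ratios `L_ψⁿ⁺¹ 1 / L_ψⁿ 1` converge exponentially fast to a positive constant, the leading
eigenvalue of the transfer operator, and are bounded away from zero. -/
lemma exists_eigenvalue (hψ : Potential θ K ψ) :
    ∃ m > 0, ∃ lam ≥ m, ∃ C > 0, ∃ ρ ∈ Set.Ioo (0 : ℝ) 1, ∀ n w,
      m ≤ ratio ψ n w ∧ |ratio ψ n w - lam| ≤ C * ρ ^ n := by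
  have h1θ : 0 < 1 - θ := by linarith [hψ.theta.2]
  have hθ0 := hψ.theta.1
  have hK0 := hψ.K_nonneg
  set K₁ := K / (1 - θ) with hK₁
  have hK₁0 : 0 ≤ K₁ := div_nonneg hK0 h1θ.le
  set K₂ := K + K₁ * θ + K₁ with hK₂
  obtain ⟨D, ρ, hρ, c₁, hc₁, c₂, hc₂, hD1, hDl, hDu, hD⟩ :=
    exists_weights (θ := θ) (K := K₂) hψ.theta (by positivity)
  have hDpos : ∀ n, 0 < D n := fun n => (mul_pos hc₁ (pow_pos hθ0 n)).trans_le (hDl n)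
  -- the first ratio is bounded, hence oscillates by a bounded multiple of the weights
  have hr0 : LogHolder θ (K₁ + K₁) (ratio ψ 0) :=
    (hψ.iter_holder 1).div (hψ.iter_holder 0) (fun w => (hψ.iter_pos 1 w).le) (hψ.iter_pos 0)
  set E := Real.exp (K₁ + K₁) with hE
  have hE0 : 0 < E := Real.exp_pos _
  set R := ratio ψ 0 [] with hR
  have hRpos : 0 < R := hψ.ratio_pos 0 []
  have hub : ∀ w, ratio ψ 0 w ≤ E * R := fun w => by
    simpa using hr0 [] w []
  have hlb : ∀ w, E⁻¹ * R ≤ ratio ψ 0 w := fun w => by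
    rw [inv_mul_le_iff₀ hE0]
    simpa using hr0 [] [] w
  obtain ⟨V, hV0, hV⟩ : ∃ V > 0, OscBound D V (ratio ψ 0) := by
    refine ⟨((K₁ + K₁ + 1) * (E * (E * R))) / c₁, by positivity, ?_⟩
    have key : ∀ b w w', ratio ψ 0 (b ++ w) - ratio ψ 0 (b ++ w') ≤
        ((K₁ + K₁ + 1) * (E * (E * R))) / c₁ * D b.length := by
      intro b w w'
      have h1 := hr0 b w w'
      set t := θ ^ b.length with ht
      have ht0 : 0 < t := by positivity
      have ht1 : t ≤ 1 := pow_le_one₀ hθ0.le hψ.theta.2.le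
      have h2 : Real.exp ((K₁ + K₁) * t) - 1 ≤ (K₁ + K₁) * t * E := by
        -- `e^x - 1 ≤ x e^x`
        have h3 := Real.add_one_le_exp (-((K₁ + K₁) * t))
        have h4 : Real.exp ((K₁ + K₁) * t) ≤ E := Real.exp_le_exp.mpr (by nlinarith)
        have h5 : Real.exp ((K₁ + K₁) * t) * Real.exp (-((K₁ + K₁) * t)) = 1 := by
          rw [← Real.exp_add]; simp
        have h6 : 0 ≤ (K₁ + K₁) * t := by positivity
        nlinarith [Real.exp_pos ((K₁ + K₁) * t)]
      have h7 := hub (b ++ w')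
      have h8 := hψ.ratio_pos 0 (b ++ w')
      have h9 : c₁ * t ≤ D b.length := hDl _
      calc ratio ψ 0 (b ++ w) - ratio ψ 0 (b ++ w')
          ≤ (Real.exp ((K₁ + K₁) * t) - 1) * ratio ψ 0 (b ++ w') := by linarith
        _ ≤ ((K₁ + K₁) * t * E) * (E * R) := by gcongr
        _ ≤ (K₁ + K₁ + 1) * (E * (E * R)) * t := by
            have : 0 < t * E * (E * R) := by positivity
            linarith
        _ ≤ (K₁ + K₁ + 1) * (E * (E * R)) * (D b.length / c₁) := by
            gcongr
            rw [le_div_iff₀ hc₁]; linarith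
        _ = _ := by ring
    intro b w w'
    rw [abs_le]
    constructor <;> linarith [key b w w', key b w' w]
  have hosc : ∀ n, OscBound D (ρ ^ n * V) (ratio ψ n) := by
    intro n
    induction n with
    | zero => simpa using hV
    | succ n ih =>
      rw [hψ.ratio_succ, pow_succ', mul_assoc]
      exact OscBound.avg (hψ.transition_iter n) hD1 hD
        (mul_nonneg (pow_nonneg hρ.1.le _) hV0.le) ih
  have hlow : ∀ n w, E⁻¹ * R ≤ ratio ψ n w := by
    intro n
    induction n with
    | zero => exact hlb
    | succ n ih => rw [hψ.ratio_succ]; exact le_avg (hψ.transition_iter n) ih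
  have hstep : ∀ n w, |ratio ψ (n + 1) w - ratio ψ n w| ≤ V * ρ ^ n := by
    intro n w
    rw [hψ.ratio_succ, mul_comm]
    exact abs_avg_sub_le (hψ.transition_iter n) hD1
      (mul_nonneg (pow_nonneg hρ.1.le _) hV0.le) (hosc n) w
  have hcau : ∀ n, dist (ratio ψ n []) (ratio ψ (n + 1) []) ≤ V * ρ ^ n := fun n => by
    rw [dist_comm]; exact hstep n []
  obtain ⟨lam, hlam⟩ := cauchySeq_tendsto_of_complete (cauchySeq_of_le_geometric ρ V hρ.2 hcau)
  have hlam2 := dist_le_of_le_geometric_of_tendsto ρ V hρ.2 hcau hlam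
  have h1ρ : 0 < 1 - ρ := by linarith [hρ.2]
  refine ⟨E⁻¹ * R, by positivity, lam, ge_of_tendsto' hlam fun n => hlow n [],
    V / (1 - ρ) + V, by positivity, ρ, hρ, fun n w => ⟨hlow n w, ?_⟩⟩
  · have h1 := hosc n [] w []
    have h2 := hlam2 n
    rw [Real.dist_eq] at h2
    simp only [List.nil_append, List.length_nil] at h1
    have hρn : 0 < ρ ^ n := pow_pos hρ.1 n
    have h3 : ρ ^ n * V * D 0 ≤ ρ ^ n * V * 1 := by
      have := hD1 0
      gcongr
    calc |ratio ψ n w - lam| ≤ |ratio ψ n w - ratio ψ n []| + |ratio ψ n [] - lam| := abs_sub_le _ _ _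
      _ ≤ ρ ^ n * V * 1 + V * ρ ^ n / (1 - ρ) := by linarith
      _ = _ := by ring

end Potential

end Iterates

/-! ### The pressure function -/

section Pressure

variable {ι : Type*} [Fintype ι]

/-- The potential `p_i^q (‖A_{iw}‖ / ‖A_w‖)^{2s}`. -/
def psi (A : ι → SL2) (p : ι → ℝ) (q s : ℝ) (i : ι) (w : List ι) : ℝ :=
  p i ^ q * Real.exp (s * phi A i w)

/-- The sum `Σ_{i ∈ Iⁿ} p_i^q ‖A_i‖^{2s}`. -/
def psiSum (A : ι → SL2) (p : ι → ℝ) (q s : ℝ) (n : ℕ) : ℝ :=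
  ∑ w : Fin n → ι, (wordWeight p (List.ofFn w)) ^ q * (wordNorm A (List.ofFn w)) ^ (2 * s)

lemma psiAvg_eq (A : ι → SL2) (p : ι → ℝ) (q s : ℝ) (n : ℕ) :
    psiAvg A p q s n = (1 / (n : ℝ)) * Real.logb 2 (psiSum A p q s n) := rfl

lemma wordWeight_pos {p : ι → ℝ} (hp : ∀ i, 0 < p i) (w : List ι) : 0 < wordWeight p w := by
  rw [wordWeight]
  refine List.prod_pos fun x hx => ?_
  obtain ⟨i, -, rfl⟩ := List.mem_map.mp hx
  exact hp i

lemma iter_psi {A : ι → SL2} {p : ι → ℝ} (hp : ∀ i, 0 < p i) (q s : ℝ) (n : ℕ) (w : List ι) :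
    iter (psi A p q s) n w = ∑ v : Fin n → ι, (wordWeight p (List.ofFn v)) ^ q *
      (wordNorm A (List.ofFn v ++ w) / wordNorm A w) ^ (2 * s) := by
  induction n generalizing w with
  | zero => simp [iter_zero, wordWeight, div_self (wordNorm_pos A w).ne']
  | succ n ih =>
    rw [iter_succ, ← (Fin.snocEquiv fun _ => ι).sum_comp, Fintype.sum_prod_type]
    refine Finset.sum_congr rfl fun i _ => ?_
    rw [ih, Finset.mul_sum]
    refine Finset.sum_congr rfl fun v _ => ?_
    have e : List.ofFn ((Fin.snocEquiv fun _ => ι) (i, v)) = List.ofFn v ++ [i] := by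
      rw [List.ofFn_succ']
      simp [Fin.snocEquiv]
    rw [e, psi, exp_mul_phi]
    have hw := wordNorm_pos A w
    have hiw := wordNorm_pos A (i :: w)
    have hviw := wordNorm_pos A (List.ofFn v ++ i :: w)
    have e2 : wordWeight p (List.ofFn v ++ [i]) = wordWeight p (List.ofFn v) * p i := by
      simp [wordWeight]
    have e3 : wordNorm A (List.ofFn v ++ [i] ++ w) / wordNorm A w =
        wordNorm A (i :: w) / wordNorm A w *
          (wordNorm A (List.ofFn v ++ i :: w) / wordNorm A (i :: w)) := by
      rw [List.append_assoc, List.singleton_append]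
      field_simp
    rw [e2, e3, Real.mul_rpow (wordWeight_pos hp _).le (hp i).le,
      Real.mul_rpow (div_pos hiw hw).le (div_pos hviw hiw).le]
    ring

lemma iter_psi_nil {A : ι → SL2} {p : ι → ℝ} (hp : ∀ i, 0 < p i) (q s : ℝ) (n : ℕ) :
    iter (psi A p q s) n [] = psiSum A p q s n := by
  rw [iter_psi hp, psiSum]
  simp [wordNorm_nil]

lemma logHolder_exp_mul {θ C : ℝ} {f : List ι → ℝ}
    (hf : ∀ b w w', |f (b ++ w) - f (b ++ w')| ≤ C * θ ^ b.length) (s : ℝ) :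
    LogHolder θ (|s| * C) (fun w => Real.exp (s * f w)) := fun b w w' => by
  rw [← Real.exp_add]
  refine Real.exp_le_exp.mpr ?_
  have h1 : s * (f (b ++ w) - f (b ++ w')) ≤ |s| * (C * θ ^ b.length) := by
    refine (le_abs_self _).trans ?_
    rw [abs_mul]
    exact mul_le_mul_of_nonneg_left (hf b w w') (abs_nonneg _)
  linarith

lemma potential_psi {A : ι → SL2} {p : ι → ℝ} (hp : ∀ i, 0 < p i) {C θ : ℝ} (hC : 0 < C)
    (hθ : θ ∈ Set.Ioo (0 : ℝ) 1)
    (hf : ∀ i b w w', |phi A i (b ++ w) - phi A i (b ++ w')| ≤ C * θ ^ b.length) (q s : ℝ) :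
    Potential θ (|s| * C) (psi A p q s) where
  theta := hθ
  K_nonneg := by positivity
  pos i w := mul_pos (Real.rpow_pos_of_pos (hp i) _) (Real.exp_pos _)
  holder i := by
    have := (LogHolder.const (ι := ι) (K := 0) hθ.1.le le_rfl
      (Real.rpow_pos_of_pos (hp i) q).le).mul (logHolder_exp_mul (hf i) s)
      (fun _ => (Real.rpow_pos_of_pos (hp i) q).le) (fun _ => (Real.exp_pos _).le)
    rwa [zero_add] at this

/-- The pressure `Ψ_q(s)`, the limit of `psiAvg`. -/
def pressure (A : ι → SL2) (p : ι → ℝ) (q s : ℝ) : ℝ := limUnder atTop (psiAvg A p q s)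

variable [Nonempty ι]

lemma Potential.tendsto_log_iter {θ K : ℝ} {ψ : ι → List ι → ℝ} (hψ : Potential θ K ψ) {lam : ℝ}
    (hlam : 0 < lam) (h : Tendsto (fun n => ratio ψ n []) atTop (𝓝 lam)) :
    Tendsto (fun n : ℕ => (1 / (n : ℝ)) * Real.logb 2 (iter ψ n [])) atTop
      (𝓝 (Real.logb 2 lam)) := by
  have h1 : ∀ n, Real.logb 2 (iter ψ n []) = ∑ k ∈ Finset.range n, Real.logb 2 (ratio ψ k []) := by
    intro n
    induction n with
    | zero => simp [iter_zero]
    | succ n ih =>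
      rw [Finset.sum_range_succ, ← ih, ← Real.logb_mul (hψ.iter_pos _ _).ne' (hψ.ratio_pos _ _).ne',
        ratio, mul_div_cancel₀ _ (hψ.iter_pos _ _).ne']
  have h2 : Tendsto (fun n => Real.logb 2 (ratio ψ n [])) atTop (𝓝 (Real.logb 2 lam)) :=
    h.logb hlam.ne'
  refine h2.cesaro.congr fun n => ?_
  rw [h1, one_div]

variable {A : ι → SL2} {p : ι → ℝ} {c r L : ℝ}

lemma HypData.tendsto_pressure (h : HypData A c r L) (hp : ∀ i, 0 < p i) (q s : ℝ) :
    Tendsto (psiAvg A p q s) atTop (𝓝 (pressure A p q s)) := by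
  obtain ⟨C, hC, θ, hθ, hf⟩ := h.exists_phi_holder
  have hψ := potential_psi hp hC hθ hf q s
  obtain ⟨m, hm, lam, hmlam, C', -, ρ, hρ, hb⟩ := hψ.exists_eigenvalue
  have hlam : 0 < lam := hm.trans_le hmlam
  have h1 : Tendsto (fun n => ratio (psi A p q s) n []) atTop (𝓝 lam) := by
    rw [tendsto_iff_norm_sub_tendsto_zero]
    refine squeeze_zero (fun _ => norm_nonneg _) (fun n => (hb n []).2) ?_
    simpa using (tendsto_pow_atTop_nhds_zero_of_lt_one hρ.1.le hρ.2).const_mul C'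
  have h2 := hψ.tendsto_log_iter hlam h1
  simp only [iter_psi_nil hp, ← psiAvg_eq] at h2
  exact tendsto_nhds_limUnder ⟨_, h2⟩

lemma psiSum_pos (hp : ∀ i, 0 < p i) (q s : ℝ) (n : ℕ) : 0 < psiSum A p q s n :=
  Finset.sum_pos (fun _ _ => mul_pos (Real.rpow_pos_of_pos (wordWeight_pos hp _) _)
    (Real.rpow_pos_of_pos (wordNorm_pos _ _) _)) Finset.univ_nonempty

/-- The pressure increases in `s` at speed between `2 log r` and `2 log L`. -/
lemma HypData.pressure_bounds (h : HypData A c r L) (hp : ∀ i, 0 < p i) (q : ℝ) {s s' : ℝ}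
    (hs : s ≤ s') :
    pressure A p q s + 2 * (s' - s) * Real.logb 2 r ≤ pressure A p q s' ∧
    pressure A p q s' ≤ pressure A p q s + 2 * (s' - s) * Real.logb 2 L := by
  have hL0 : 0 < L := one_pos.trans h.L_gt
  have hr0 : 0 < r := one_pos.trans h.r_gt
  have hc0 := h.c_pos
  have hs2 : 0 ≤ 2 * s' - 2 * s := by linarith
  have hsplit : ∀ w, wordNorm A w ^ (2 * s') =
      wordNorm A w ^ (2 * s) * wordNorm A w ^ (2 * s' - 2 * s) := fun w => by
    rw [← Real.rpow_add (wordNorm_pos A w)]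
    ring_nf
  have hlow : ∀ n, psiSum A p q s n * (c * r ^ n) ^ (2 * s' - 2 * s) ≤ psiSum A p q s' n := by
    intro n
    rw [psiSum, psiSum, Finset.sum_mul]
    refine Finset.sum_le_sum fun v _ => ?_
    rw [hsplit, mul_assoc]
    have h1 := h.lower (List.ofFn v)
    rw [List.length_ofFn] at h1
    have h2 := (Real.rpow_pos_of_pos (wordWeight_pos hp (List.ofFn v)) q).le
    have h3 := (Real.rpow_pos_of_pos (wordNorm_pos A (List.ofFn v)) (2 * s)).le
    gcongr
  have hupp : ∀ n, psiSum A p q s' n ≤ psiSum A p q s n * (L ^ n) ^ (2 * s' - 2 * s) := by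
    intro n
    rw [psiSum, psiSum, Finset.sum_mul]
    refine Finset.sum_le_sum fun v _ => ?_
    rw [hsplit, mul_assoc]
    have h1 := h.wordNorm_le (List.ofFn v)
    rw [List.length_ofFn] at h1
    have h2 := (Real.rpow_pos_of_pos (wordWeight_pos hp (List.ofFn v)) q).le
    have h3 := (Real.rpow_pos_of_pos (wordNorm_pos A (List.ofFn v)) (2 * s)).le
    have h4 := wordNorm_pos A (List.ofFn v)
    gcongr
  have t0 := h.tendsto_pressure hp q s
  have t1 := h.tendsto_pressure hp q s'
  have tn : Tendsto (fun n : ℕ => 1 / (n : ℝ)) atTop (𝓝 0) := tendsto_one_div_atTop_nhds_zero_nat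
  constructor
  · have t2 : Tendsto (fun n : ℕ => psiAvg A p q s n + 2 * (s' - s) *
        (1 / (n : ℝ) * Real.logb 2 c + Real.logb 2 r)) atTop
        (𝓝 (pressure A p q s + 2 * (s' - s) * (0 * Real.logb 2 c + Real.logb 2 r))) :=
      t0.add (((tn.mul_const _).add_const _).const_mul _)
    rw [zero_mul, zero_add] at t2
    refine le_of_tendsto_of_tendsto t2 t1 ?_
    filter_upwards [eventually_gt_atTop 0] with n hn
    have hn0 : (n : ℝ) ≠ 0 := by exact_mod_cast hn.ne'
    have h1 := Real.logb_le_logb_of_le (b := 2) (by norm_num)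
      (mul_pos (psiSum_pos hp q s n) (Real.rpow_pos_of_pos (by positivity) _)) (hlow n)
    rw [Real.logb_mul (psiSum_pos hp q s n).ne' (Real.rpow_pos_of_pos (by positivity) _).ne',
      Real.logb_rpow_eq_mul_logb_of_pos (by positivity), Real.logb_mul hc0.ne' (by positivity),
      Real.logb_pow] at h1
    rw [psiAvg_eq, psiAvg_eq]
    have h2 := mul_le_mul_of_nonneg_left h1 (by positivity : 0 ≤ 1 / (n : ℝ))
    refine le_trans (le_of_eq ?_) h2
    field_simp
  · have t2 : Tendsto (fun n : ℕ => psiAvg A p q s n + 2 * (s' - s) * Real.logb 2 L) atTop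
        (𝓝 (pressure A p q s + 2 * (s' - s) * Real.logb 2 L)) := t0.add_const _
    refine le_of_tendsto_of_tendsto t1 t2 ?_
    filter_upwards [eventually_gt_atTop 0] with n hn
    have hn0 : (n : ℝ) ≠ 0 := by exact_mod_cast hn.ne'
    have h1 := Real.logb_le_logb_of_le (b := 2) (by norm_num) (psiSum_pos hp q s' n) (hupp n)
    rw [Real.logb_mul (psiSum_pos hp q s n).ne' (Real.rpow_pos_of_pos (by positivity) _).ne',
      Real.logb_rpow_eq_mul_logb_of_pos (by positivity), Real.logb_pow] at h1
    rw [psiAvg_eq, psiAvg_eq]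
    have h2 := mul_le_mul_of_nonneg_left h1 (by positivity : 0 ≤ 1 / (n : ℝ))
    refine h2.trans (le_of_eq ?_)
    field_simp

/-- A positive bounded supersolution bounds the pressure from above. -/
lemma HypData.pressure_le (h : HypData A c r L) (hp : ∀ i, 0 < p i) {q s a m M : ℝ}
    {g : List ι → ℝ} (hm : 0 < m) (ha : 0 < a) (hg : ∀ w, m ≤ g w ∧ g w ≤ M)
    (hL : ∀ w, ∑ i, psi A p q s i w * g (i :: w) ≤ a * g w) :
    pressure A p q s ≤ Real.logb 2 a := by
  have hψ0 : ∀ i w, 0 ≤ psi A p q s i w := fun i w =>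
    mul_nonneg (Real.rpow_pos_of_pos (hp i) _).le (Real.exp_pos _).le
  have h1 : ∀ n w, m * iter (psi A p q s) n w ≤ a ^ n * g w := by
    intro n
    induction n with
    | zero => intro w; simpa [iter_zero] using (hg w).1
    | succ n ih =>
      intro w
      rw [iter_succ, Finset.mul_sum, pow_succ, mul_assoc]
      calc _ ≤ ∑ i, a ^ n * (psi A p q s i w * g (i :: w)) := by
            refine Finset.sum_le_sum fun i _ => ?_
            have := mul_le_mul_of_nonneg_left (ih (i :: w)) (hψ0 i w)
            linarith
        _ ≤ _ := by
            rw [← Finset.mul_sum]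
            exact mul_le_mul_of_nonneg_left (hL w) (pow_pos ha n).le
  have hM : 0 < M := hm.trans_le ((hg []).1.trans (hg []).2)
  have tn : Tendsto (fun n : ℕ => 1 / (n : ℝ)) atTop (𝓝 0) := tendsto_one_div_atTop_nhds_zero_nat
  have t : Tendsto (fun n : ℕ => 1 / (n : ℝ) * Real.logb 2 (M / m) + Real.logb 2 a) atTop
      (𝓝 (0 * Real.logb 2 (M / m) + Real.logb 2 a)) := (tn.mul_const _).add_const _
  rw [zero_mul, zero_add] at t
  refine le_of_tendsto_of_tendsto (h.tendsto_pressure hp q s) t ?_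
  filter_upwards [eventually_gt_atTop 0] with n hn
  have hn0 : (n : ℝ) ≠ 0 := by exact_mod_cast hn.ne'
  have h2 : psiSum A p q s n ≤ (M / m) * a ^ n := by
    rw [div_mul_eq_mul_div, le_div_iff₀ hm, ← iter_psi_nil hp]
    have := h1 n []
    have := mul_le_mul_of_nonneg_left (hg []).2 (pow_pos ha n).le
    linarith
  have h3 := Real.logb_le_logb_of_le (b := 2) (by norm_num) (psiSum_pos hp q s n) h2
  rw [Real.logb_mul (by positivity) (by positivity), Real.logb_pow] at h3
  rw [psiAvg_eq]
  have h4 := mul_le_mul_of_nonneg_left h3 (by positivity : 0 ≤ 1 / (n : ℝ))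
  refine h4.trans (le_of_eq ?_)
  field_simp

/-- A positive bounded subsolution bounds the pressure from below. -/
lemma HypData.le_pressure (h : HypData A c r L) (hp : ∀ i, 0 < p i) {q s a m M : ℝ}
    {g : List ι → ℝ} (hm : 0 < m) (ha : 0 < a) (hg : ∀ w, m ≤ g w ∧ g w ≤ M)
    (hL : ∀ w, a * g w ≤ ∑ i, psi A p q s i w * g (i :: w)) :
    Real.logb 2 a ≤ pressure A p q s := by
  have hψ0 : ∀ i w, 0 ≤ psi A p q s i w := fun i w =>
    mul_nonneg (Real.rpow_pos_of_pos (hp i) _).le (Real.exp_pos _).le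
  have hM : 0 < M := hm.trans_le ((hg []).1.trans (hg []).2)
  have h1 : ∀ n w, a ^ n * g w ≤ M * iter (psi A p q s) n w := by
    intro n
    induction n with
    | zero => intro w; simpa [iter_zero] using (hg w).2
    | succ n ih =>
      intro w
      rw [iter_succ, Finset.mul_sum, pow_succ, mul_assoc]
      calc a ^ n * (a * g w) ≤ ∑ i, a ^ n * (psi A p q s i w * g (i :: w)) := by
            rw [← Finset.mul_sum]
            exact mul_le_mul_of_nonneg_left (hL w) (pow_pos ha n).le
        _ ≤ _ := by
            refine Finset.sum_le_sum fun i _ => ?_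
            have := mul_le_mul_of_nonneg_left (ih (i :: w)) (hψ0 i w)
            linarith
  have tn : Tendsto (fun n : ℕ => 1 / (n : ℝ)) atTop (𝓝 0) := tendsto_one_div_atTop_nhds_zero_nat
  have t : Tendsto (fun n : ℕ => 1 / (n : ℝ) * Real.logb 2 (m / M) + Real.logb 2 a) atTop
      (𝓝 (0 * Real.logb 2 (m / M) + Real.logb 2 a)) := (tn.mul_const _).add_const _
  rw [zero_mul, zero_add] at t
  refine le_of_tendsto_of_tendsto t (h.tendsto_pressure hp q s) ?_
  filter_upwards [eventually_gt_atTop 0] with n hn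
  have hn0 : (n : ℝ) ≠ 0 := by exact_mod_cast hn.ne'
  have h2 : (m / M) * a ^ n ≤ psiSum A p q s n := by
    rw [div_mul_eq_mul_div, div_le_iff₀ hM, ← iter_psi_nil hp]
    have := h1 n []
    have := mul_le_mul_of_nonneg_left (hg []).1 (pow_pos ha n).le
    linarith
  have h3 := Real.logb_le_logb_of_le (b := 2) (by norm_num) (by positivity) h2
  rw [Real.logb_mul (by positivity) (by positivity), Real.logb_pow] at h3
  rw [psiAvg_eq]
  have h4 := mul_le_mul_of_nonneg_left h3 (by positivity : 0 ≤ 1 / (n : ℝ))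
  refine le_trans (le_of_eq ?_) h4
  field_simp

lemma HypData.logb_r_pos (h : HypData A c r L) : 0 < Real.logb 2 r :=
  Real.logb_pos (by norm_num) h.r_gt

lemma HypData.continuous_pressure (h : HypData A c r L) (hp : ∀ i, 0 < p i) (q : ℝ) :
    Continuous (pressure A p q) := by
  have hL : 0 ≤ 2 * Real.logb 2 L := by
    have := Real.logb_pos (b := 2) (by norm_num) h.L_gt
    linarith
  have : LipschitzWith ⟨2 * Real.logb 2 L, hL⟩ (pressure A p q) := by
    refine LipschitzWith.of_le_add_mul _ fun x y => ?_
    rw [Real.dist_eq]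
    change _ ≤ _ + 2 * Real.logb 2 L * _
    rcases le_total x y with hxy | hxy
    · have h1 := (h.pressure_bounds hp q hxy).1
      have h2 := h.logb_r_pos
      have h3 : 0 ≤ 2 * (y - x) * Real.logb 2 r :=
        mul_nonneg (by linarith) h2.le
      have h4 : 0 ≤ 2 * Real.logb 2 L * |x - y| := mul_nonneg hL (abs_nonneg _)
      linarith
    · have h1 := (h.pressure_bounds hp q hxy).2
      rw [abs_of_nonneg (sub_nonneg.mpr hxy)]
      linarith
  exact this.continuous

/-- Every `Ψ_q` has exactly one zero. -/
lemma HypData.existsUnique_zero (h : HypData A c r L) (hp : ∀ i, 0 < p i) (q : ℝ) :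
    ∃! s, pressure A p q s = 0 := by
  have hr := h.logb_r_pos
  have hmono : StrictMono (pressure A p q) := fun s s' hs => by
    have h1 := (h.pressure_bounds hp q hs.le).1
    have : 0 < 2 * (s' - s) * Real.logb 2 r := mul_pos (by linarith) hr
    linarith
  set a := |pressure A p q 0| / (2 * Real.logb 2 r) with ha
  have ha0 : 0 ≤ a := by positivity
  have ea : 2 * a * Real.logb 2 r = |pressure A p q 0| := by rw [ha]; field_simp
  have h1 := (h.pressure_bounds hp q (neg_nonpos.mpr ha0)).1
  have h2 := (h.pressure_bounds hp q ha0).1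
  have h3 : pressure A p q (-a) ≤ 0 := by
    rw [zero_sub, neg_neg, ea] at h1
    linarith [le_abs_self (pressure A p q 0)]
  have h4 : 0 ≤ pressure A p q a := by
    rw [sub_zero, ea] at h2
    linarith [neg_abs_le (pressure A p q 0)]
  obtain ⟨s, -, hs⟩ := intermediate_value_Icc (by linarith : -a ≤ a)
    (h.continuous_pressure hp q).continuousOn ⟨h3, h4⟩
  exact ⟨s, hs, fun y hy => hmono.injective (hy.trans hs.symm)⟩

/-- For `q > 1` the pressure is negative at `s = 0`, so its zero is positive. -/
lemma HypData.zero_pos (h : HypData A c r L) (hcard : 2 ≤ Fintype.card ι) (hp : ∀ i, 0 < p i)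
    (hp1 : ∑ i, p i = 1) {q s : ℝ} (hq : 1 < q) (hs : pressure A p q s = 0) : 0 < s := by
  have hlt : ∀ i, p i < 1 := by
    intro i
    obtain ⟨j, hj⟩ : ∃ j, j ≠ i := Fintype.exists_ne_of_one_lt_card (by omega) i
    rw [← hp1]
    exact Finset.single_lt_sum hj (Finset.mem_univ _) (Finset.mem_univ _) (hp j)
      fun k _ _ => (hp k).le
  have hS : ∑ i, p i ^ q < 1 := by
    rw [← hp1]
    refine Finset.sum_lt_sum_of_nonempty Finset.univ_nonempty fun i _ => ?_
    calc p i ^ q < p i ^ (1 : ℝ) := Real.rpow_lt_rpow_of_exponent_gt (hp i) (hlt i) hq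
      _ = p i := Real.rpow_one _
  have hS0 : 0 < ∑ i, p i ^ q :=
    Finset.sum_pos (fun i _ => Real.rpow_pos_of_pos (hp i) q) Finset.univ_nonempty
  have h0 : pressure A p q 0 ≤ Real.logb 2 (∑ i, p i ^ q) :=
    h.pressure_le hp (g := fun _ => 1) (m := 1) (M := 1) one_pos hS0 (fun _ => ⟨le_rfl, le_rfl⟩)
      fun w => by simp [psi]
  have h1 : Real.logb 2 (∑ i, p i ^ q) < 0 := Real.logb_neg (by norm_num) hS0 hS
  by_contra hneg
  have h2 := (h.pressure_bounds hp q (not_lt.mp hneg)).1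
  have h3 : 0 ≤ 2 * (0 - s) * Real.logb 2 r :=
    mul_nonneg (by linarith) h.logb_r_pos.le
  linarith

end Pressure

/-! ### The eigenfunction at zero pressure -/

section Eigenfunction

variable {ι : Type*} [Fintype ι] [Nonempty ι]

/-- At zero pressure the iterates `L_ψⁿ 1` converge to a positive eigenfunction. -/
lemma Potential.exists_eigenfunction {θ K : ℝ} {ψ : ι → List ι → ℝ} (hψ : Potential θ K ψ)
    (h0 : Tendsto (fun n : ℕ => (1 / (n : ℝ)) * Real.logb 2 (iter ψ n [])) atTop (𝓝 0)) :
    ∃ h : List ι → ℝ, ∃ m > 0, ∃ M, (∀ w, m ≤ h w ∧ h w ≤ M) ∧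
      LogHolder θ (K / (1 - θ)) h ∧ ∀ w, ∑ i, ψ i w * h (i :: w) = h w := by
  obtain ⟨m, hm, lam, hmlam, C, hC, ρ, hρ, hb⟩ := hψ.exists_eigenvalue
  have hlam : 0 < lam := hm.trans_le hmlam
  have ht : ∀ w, Tendsto (fun n => ratio ψ n w) atTop (𝓝 lam) := fun w => by
    rw [tendsto_iff_norm_sub_tendsto_zero]
    refine squeeze_zero (fun _ => norm_nonneg _) (fun n => (hb n w).2) ?_
    simpa using (tendsto_pow_atTop_nhds_zero_of_lt_one hρ.1.le hρ.2).const_mul C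
  have hl : Real.logb 2 lam = 0 := tendsto_nhds_unique (hψ.tendsto_log_iter hlam (ht [])) h0
  have hl0 : Real.log lam = 0 := by
    rw [Real.logb, div_eq_zero_iff] at hl
    exact hl.resolve_right (Real.log_pos (by norm_num)).ne'
  have hlog : ∀ n w, |Real.log (ratio ψ n w)| ≤ C / m * ρ ^ n := by
    intro n w
    have h1 := abs_log_sub_log_le hm (hb n w).1 hmlam
    rw [hl0, sub_zero] at h1
    refine h1.trans ?_
    rw [div_mul_eq_mul_div]
    exact div_le_div_of_nonneg_right (hb n w).2 hm.le
  have hgeo : HasSum (fun n : ℕ => C / m * ρ ^ n) (C / m * (1 - ρ)⁻¹) :=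
    (hasSum_geometric_of_lt_one hρ.1.le hρ.2).mul_left _
  have hsum : ∀ w, Summable fun n => Real.log (ratio ψ n w) := fun w =>
    Summable.of_norm_bounded hgeo.summable fun n => hlog n w
  have hB : ∀ w, |∑' n, Real.log (ratio ψ n w)| ≤ C / m * (1 - ρ)⁻¹ := fun w => by
    rw [← Real.norm_eq_abs]
    exact tsum_of_norm_bounded hgeo fun n => hlog n w
  set h : List ι → ℝ := fun w => Real.exp (∑' n, Real.log (ratio ψ n w)) with hh
  have hlim : ∀ w, Tendsto (fun n => iter ψ n w) atTop (𝓝 (h w)) := by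
    intro w
    refine ((Real.continuous_exp.tendsto _).comp (hsum w).hasSum.tendsto_sum_nat).congr fun n => ?_
    rw [Function.comp_apply, Real.exp_sum]
    induction n with
    | zero => simp [iter_zero]
    | succ n ih =>
      rw [Finset.prod_range_succ, ih, Real.exp_log (hψ.ratio_pos n w), ratio,
        mul_div_cancel₀ _ (hψ.iter_pos n w).ne']
  refine ⟨h, Real.exp (-(C / m * (1 - ρ)⁻¹)), Real.exp_pos _, Real.exp (C / m * (1 - ρ)⁻¹),
    fun w => ⟨?_, ?_⟩, fun b w w' => ?_, fun w => ?_⟩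
  · exact Real.exp_le_exp.mpr (abs_le.mp (hB w)).1
  · exact Real.exp_le_exp.mpr (abs_le.mp (hB w)).2
  · exact le_of_tendsto_of_tendsto' (hlim _) ((hlim _).const_mul _)
      fun n => hψ.iter_holder n b w w'
  · refine tendsto_nhds_unique (tendsto_finsetSum _ fun i _ => (hlim (i :: w)).const_mul (ψ i w)) ?_
    exact (((tendsto_add_atTop_iff_nat 1).mpr (hlim w))).congr fun n => iter_succ ψ n w

end Eigenfunction

/-! ### The Banach space of Hölder functions on words -/

section HolderSpace

open scoped ENNReal

variable {ι : Type*}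

variable (ι) in
/-- The Banach space of `θ`-Hölder functions on finite words. A function `f` is encoded by the
bounded family of its normalised tree differences `θ⁻ⁿ⁻¹ (f(bj) - f(b))`, `n = |b|`, together with
the value `f([])`; see `ev` for the decoding. -/
abbrev HSpace : Type _ := lp (fun _ : List ι => ℝ) ∞

/-- The function on words encoded by an element of `HSpace ι`, at the Hölder exponent `θ`. -/
def ev (θ : ℝ) : HSpace ι →ₗ[ℝ] (List ι → ℝ) where
  toFun x w := ∑ k ∈ Finset.range (w.length + 1), θ ^ k * x (w.take k)
  map_add' x y := by
    funext w
    simp [mul_add, Finset.sum_add_distrib]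
  map_smul' a x := by
    funext w
    simp only [lp.coeFn_smul, Pi.smul_apply, smul_eq_mul, RingHom.id_apply, Finset.mul_sum]
    exact Finset.sum_congr rfl fun k _ => by ring

/-- Oscillation on cylinders of depth `n` at most `V θⁿ`. -/
abbrev HBound (θ V : ℝ) (f : List ι → ℝ) : Prop := OscBound (fun n => θ ^ n) V f

variable {θ : ℝ}

lemma ev_apply (x : HSpace ι) (w : List ι) :
    ev θ x w = ∑ k ∈ Finset.range (w.length + 1), θ ^ k * x (w.take k) := rfl

lemma ev_nil (x : HSpace ι) : ev θ x [] = x [] := by simp [ev_apply]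

lemma ev_concat (x : HSpace ι) (b : List ι) (j : ι) :
    ev θ x (b ++ [j]) = ev θ x b + θ ^ (b.length + 1) * x (b ++ [j]) := by
  rw [ev_apply, ev_apply, List.length_append, List.length_singleton, Finset.sum_range_succ]
  congr 1
  · refine Finset.sum_congr rfl fun k hk => ?_
    rw [List.take_append_of_le_length (by simpa [Nat.lt_succ_iff] using hk)]
  · rw [List.take_of_length_le (by simp)]

lemma sum_theta_le (hθ : θ ∈ Set.Ioo (0 : ℝ) 1) (n : ℕ) :
    ∑ k ∈ Finset.range n, θ ^ k ≤ (1 - θ)⁻¹ := by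
  rw [← tsum_geometric_of_lt_one hθ.1.le hθ.2]
  exact (summable_geometric_of_lt_one hθ.1.le hθ.2).sum_le_tsum _
    fun i _ => pow_nonneg hθ.1.le _

lemma abs_ev_le (hθ : θ ∈ Set.Ioo (0 : ℝ) 1) (x : HSpace ι) (w : List ι) :
    |ev θ x w| ≤ (1 - θ)⁻¹ * ‖x‖ := by
  rw [ev_apply]
  refine (Finset.abs_sum_le_sum_abs _ _).trans ?_
  calc _ ≤ ∑ k ∈ Finset.range (w.length + 1), θ ^ k * ‖x‖ := by
        refine Finset.sum_le_sum fun k _ => ?_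
        rw [abs_mul, abs_of_nonneg (pow_nonneg hθ.1.le k)]
        exact mul_le_mul_of_nonneg_left (lp.norm_apply_le_norm (by simp) x _)
          (pow_nonneg hθ.1.le k)
    _ ≤ _ := by
        rw [← Finset.sum_mul]
        exact mul_le_mul_of_nonneg_right (sum_theta_le hθ _) (norm_nonneg _)

lemma hBound_ev (hθ : θ ∈ Set.Ioo (0 : ℝ) 1) (x : HSpace ι) :
    HBound θ (2 * (1 - θ)⁻¹ * ‖x‖) (ev θ x) := by
  have key : ∀ b w : List ι, |ev θ x (b ++ w) - ev θ x b| ≤ (1 - θ)⁻¹ * ‖x‖ * θ ^ b.length := by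
    intro b w
    have h1 : ev θ x (b ++ w) - ev θ x b =
        ∑ k ∈ Finset.range w.length, θ ^ (b.length + 1 + k) * x ((b ++ w).take (b.length + 1 + k)) := by
      rw [ev_apply, ev_apply, List.length_append,
        show b.length + w.length + 1 = b.length + 1 + w.length by ring, Finset.sum_range_add,
        add_sub_assoc, add_comm, sub_add_eq_add_sub, add_sub_assoc]
      rw [add_eq_left, sub_eq_zero]
      refine Finset.sum_congr rfl fun k hk => ?_
      rw [List.take_append_of_le_length (by simpa [Nat.lt_succ_iff] using hk)]
    rw [h1]
    refine (Finset.abs_sum_le_sum_abs _ _).trans ?_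
    calc _ ≤ ∑ k ∈ Finset.range w.length, θ ^ b.length * (θ ^ k * ‖x‖) := by
          refine Finset.sum_le_sum fun k _ => ?_
          rw [abs_mul, abs_of_nonneg (pow_nonneg hθ.1.le _), ← mul_assoc, ← pow_add]
          refine mul_le_mul ?_ (lp.norm_apply_le_norm (by simp) x _) (abs_nonneg _)
            (pow_nonneg hθ.1.le _)
          exact pow_le_pow_of_le_one hθ.1.le hθ.2.le (by omega)
      _ ≤ _ := by
          rw [← Finset.mul_sum, ← Finset.sum_mul, mul_comm]
          gcongr
          · exact pow_nonneg hθ.1.le _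
          · exact sum_theta_le hθ _
  intro b w w'
  have h1 := abs_le.mp (key b w)
  have h2 := abs_le.mp (key b w')
  simp only
  rw [abs_le]
  constructor <;> linarith

lemma ev_injective (hθ : θ ∈ Set.Ioo (0 : ℝ) 1) : Function.Injective (ev (ι := ι) θ) := by
  intro x y hxy
  ext w
  induction w using List.reverseRecOn with
  | nil => rw [← ev_nil (θ := θ), hxy, ev_nil]
  | append_singleton b j _ =>
    have h := congrFun hxy (b ++ [j])
    rw [ev_concat, ev_concat, hxy, add_right_inj] at h
    exact mul_left_cancel₀ (pow_pos hθ.1 _).ne' h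

/-- Every Hölder function is encoded by an element of `HSpace ι`. -/
lemma exists_ev_eq (hθ : θ ∈ Set.Ioo (0 : ℝ) 1) {f : List ι → ℝ} {V : ℝ} (h0 : |f []| ≤ V)
    (hf : HBound θ V f) : ∃ x : HSpace ι, ev θ x = f ∧ ‖x‖ ≤ V / θ := by
  classical
  have hV : 0 ≤ V := (abs_nonneg _).trans h0
  have hVθ : V ≤ V / θ := by
    rw [le_div_iff₀ hθ.1]
    exact mul_le_of_le_one_right hV hθ.2.le
  set g : List ι → ℝ := fun w =>
    if w = [] then f [] else (f w - f w.dropLast) / θ ^ w.length with hg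
  have hgb : ∀ w, ‖g w‖ ≤ V / θ := by
    intro w
    induction w using List.reverseRecOn with
    | nil => simpa [hg] using h0.trans hVθ
    | append_singleton b j _ =>
      have h1 := hf b [j] []
      simp only [hg, List.append_eq_nil_iff, List.cons_ne_self, and_false, if_false,
        List.dropLast_concat, List.length_append, List.length_singleton]
      rw [List.append_nil] at h1
      rw [Real.norm_eq_abs, abs_div, abs_of_pos (pow_pos hθ.1 _), div_le_div_iff₀
        (pow_pos hθ.1 _) hθ.1, pow_succ]
      nlinarith [hθ.1]
  have hmem : Memℓp g ∞ := memℓp_infty ⟨V / θ, by rintro _ ⟨w, rfl⟩; exact hgb w⟩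
  refine ⟨⟨g, hmem⟩, ?_, lp.norm_le_of_forall_le (div_nonneg hV hθ.1.le) hgb⟩
  funext w
  induction w using List.reverseRecOn with
  | nil => rw [ev_nil]; simp [hg]
  | append_singleton b j ih =>
    rw [ev_concat, ih]
    have : (⟨g, hmem⟩ : HSpace ι) (b ++ [j]) = (f (b ++ [j]) - f b) / θ ^ (b.length + 1) := by
      change g (b ++ [j]) = _
      simp [hg]
    rw [this, mul_div_cancel₀ _ (pow_pos hθ.1 _).ne']
    ring

/-- A linear map on functions that preserves Hölder bounds is a bounded operator. -/
lemma exists_operator (hθ : θ ∈ Set.Ioo (0 : ℝ) 1) (T : (List ι → ℝ) →ₗ[ℝ] (List ι → ℝ)) (C : ℝ)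
    (hT0 : ∀ x : HSpace ι, |T (ev θ x) []| ≤ C * ‖x‖)
    (hT : ∀ x : HSpace ι, HBound θ (C * ‖x‖) (T (ev θ x))) :
    ∃ S : HSpace ι →L[ℝ] HSpace ι, ∀ x, ev θ (S x) = T (ev θ x) := by
  choose S hS hSn using fun x => exists_ev_eq hθ (hT0 x) (hT x)
  refine ⟨LinearMap.mkContinuous ⟨⟨S, fun x y => ev_injective hθ ?_⟩,
    fun a x => ev_injective hθ ?_⟩ (C / θ) fun x => ?_, fun x => hS x⟩
  · simp only [hS, map_add]
  · simp only [hS, map_smul, RingHom.id_apply]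
  · exact (hSn x).trans_eq (by ring)

/-- The constant function `1`. -/
lemma exists_one (hθ : θ ∈ Set.Ioo (0 : ℝ) 1) : ∃ x : HSpace ι, ev θ x = fun _ => 1 := by
  obtain ⟨x, hx, -⟩ := exists_ev_eq (ι := ι) (f := fun _ => 1) (V := 1) hθ (by simp)
    (fun b w w' => by simpa using pow_nonneg hθ.1.le _)
  exact ⟨x, hx⟩

/-- Evaluation at a word is a bounded functional. -/
lemma exists_evalCLM (hθ : θ ∈ Set.Ioo (0 : ℝ) 1) (w : List ι) :
    ∃ l : HSpace ι →L[ℝ] ℝ, ∀ x, l x = ev θ x w :=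
  ⟨LinearMap.mkContinuous ((LinearMap.proj w).comp (ev θ)) (1 - θ)⁻¹
    fun x => abs_ev_le hθ x w, fun _ => rfl⟩

/-- Multiplication by a Hölder function. -/
lemma exists_mulOp (hθ : θ ∈ Set.Ioo (0 : ℝ) 1) {g : List ι → ℝ} {V : ℝ} (hg : HBound θ V g) :
    ∃ S : HSpace ι →L[ℝ] HSpace ι, ∀ x w, ev θ (S x) w = g w * ev θ x w := by
  have hV : 0 ≤ V := by
    have := (abs_nonneg _).trans (hg [] [] [])
    simpa using this
  set B := |g []| + V with hB
  have hB0 : 0 ≤ B := by positivity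
  have hgB : ∀ w, |g w| ≤ B := fun w => by
    have h1 := hg [] w []
    simp only [List.nil_append, List.length_nil, pow_zero, mul_one] at h1
    have h2 := abs_sub_abs_le_abs_sub (g w) (g [])
    linarith
  have h1θ : 0 < (1 - θ)⁻¹ := inv_pos.mpr (by linarith [hθ.2])
  have := exists_operator hθ (LinearMap.mulLeft ℝ g) ((2 * B + V) * (1 - θ)⁻¹) ?_ ?_
  · obtain ⟨S, hS⟩ := this
    exact ⟨S, fun x w => by rw [hS]; rfl⟩
  · intro x
    change |g [] * ev θ x []| ≤ _
    rw [abs_mul]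
    calc _ ≤ B * ((1 - θ)⁻¹ * ‖x‖) := by
          gcongr
          · exact hgB _
          · exact abs_ev_le hθ x _
      _ ≤ _ := by
          rw [mul_assoc]
          gcongr
          linarith
  · intro x b w w'
    change |g (b ++ w) * ev θ x (b ++ w) - g (b ++ w') * ev θ x (b ++ w')| ≤ _
    have e : g (b ++ w) * ev θ x (b ++ w) - g (b ++ w') * ev θ x (b ++ w') =
        g (b ++ w) * (ev θ x (b ++ w) - ev θ x (b ++ w'))
          + (g (b ++ w) - g (b ++ w')) * ev θ x (b ++ w') := by ring
    rw [e]
    refine (abs_add_le _ _).trans ?_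
    rw [abs_mul, abs_mul]
    calc _ ≤ B * (2 * (1 - θ)⁻¹ * ‖x‖ * θ ^ b.length) + V * θ ^ b.length * ((1 - θ)⁻¹ * ‖x‖) := by
          refine add_le_add ?_ ?_
          · exact mul_le_mul (hgB _) (hBound_ev hθ x b w w') (abs_nonneg _) hB0
          · exact mul_le_mul (hg b w w') (abs_ev_le hθ x _) (abs_nonneg _)
              (mul_nonneg hV (pow_nonneg hθ.1.le _))
      _ = _ := by ring

/-- The composition with an inverse branch `w ↦ iw` of the shift. -/
lemma exists_shiftOp (hθ : θ ∈ Set.Ioo (0 : ℝ) 1) (i : ι) :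
    ∃ S : HSpace ι →L[ℝ] HSpace ι, ∀ x w, ev θ (S x) w = ev θ x (i :: w) := by
  have h1θ : 0 < (1 - θ)⁻¹ := inv_pos.mpr (by linarith [hθ.2])
  have := exists_operator hθ (LinearMap.funLeft ℝ ℝ (fun w : List ι => i :: w))
    (2 * (1 - θ)⁻¹) ?_ ?_
  · obtain ⟨S, hS⟩ := this
    exact ⟨S, fun x w => by rw [hS]; rfl⟩
  · intro x
    refine (abs_ev_le hθ x [i]).trans ?_
    gcongr
    linarith
  · intro x b w w'
    refine (hBound_ev hθ x (i :: b) w w').trans ?_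
    have h2 : θ ^ (i :: b).length ≤ θ ^ b.length :=
      pow_le_pow_of_le_one hθ.1.le hθ.2.le (by simp)
    exact mul_le_mul_of_nonneg_left h2 (by positivity)

/-- The exponential of a multiplication operator is the multiplication by the exponential. -/
lemma ev_exp_mulOp (hθ : θ ∈ Set.Ioo (0 : ℝ) 1) {g : List ι → ℝ} {S : HSpace ι →L[ℝ] HSpace ι}
    (hS : ∀ x w, ev θ (S x) w = g w * ev θ x w) (t : ℝ) (x : HSpace ι) (w : List ι) :
    ev θ (NormedSpace.exp (t • S) x) w = Real.exp (t * g w) * ev θ x w := by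
  obtain ⟨l, hl⟩ := exists_evalCLM hθ w
  have hpow : ∀ n : ℕ, l (((t • S) ^ n) x) = (t * g w) ^ n * ev θ x w := by
    intro n
    induction n with
    | zero => simp [hl]
    | succ n ih =>
      rw [pow_succ', mul_apply_eq_comp, smul_apply, map_smul, hl, hS,
        ← hl, ih, smul_eq_mul]
      ring
  have h1 := NormedSpace.exp_series_hasSum_exp' (𝕂 := ℝ) (t • S)
  have h2 := (h1.mapL ((ContinuousLinearMap.apply ℝ (HSpace ι) x)))
  have h3 := h2.mapL l
  have h4 := (NormedSpace.exp_series_hasSum_exp' (𝕂 := ℝ) (t * g w)).mul_right (ev θ x w)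
  rw [← hl, Real.exp_eq_exp_ℝ]
  refine h3.unique (h4.congr_fun ?_)
  intro n
  rw [ContinuousLinearMap.apply_apply, smul_apply, map_smul, hpow, smul_eq_mul, smul_eq_mul,
    mul_assoc]

end HolderSpace

/-! ### Analytic perturbation of an isolated simple eigenvalue -/

section Perturbation

variable {X : Type*} [NormedAddCommGroup X] [NormedSpace ℝ X] [CompleteSpace X]

lemma analyticAt_exp_mul (a b c : ℝ) (M W : X →L[ℝ] X) (z : ℝ × ℝ) :
    AnalyticAt ℝ (fun z : ℝ × ℝ =>
      Real.exp ((z.1 - b) * a) • (NormedSpace.exp ((z.2 - c) • M) * W)) z := by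
  have h1 := NormedSpace.exp_analytic (𝕂 := ℝ) (𝔸 := X →L[ℝ] X) ((z.2 - c) • M)
  have h2 : AnalyticAt ℝ (fun z : ℝ × ℝ => (z.2 - c) • M) z :=
    (analyticAt_snd.sub analyticAt_const).smul analyticAt_const
  have h3 : AnalyticAt ℝ (fun z : ℝ × ℝ => NormedSpace.exp ((z.2 - c) • M)) z :=
    AnalyticAt.comp (f := fun z : ℝ × ℝ => (z.2 - c) • M) h1 h2
  have h4 : AnalyticAt ℝ (fun z : ℝ × ℝ => Real.exp ((z.1 - b) * a)) z :=
    ((analyticAt_fst.sub analyticAt_const).mul analyticAt_const).rexp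
  exact h4.smul (h3.mul analyticAt_const)

/-- Let `P = ∑ Wᵢ` fix `e`, with `ℓ e = 1`, and suppose that `1` is not in the spectrum of
`P - (ℓ ∘ P) ⊗ e`. Along the analytic family `T z = ∑ exp ((q-q₀)aᵢ) exp ((s-s₀)Mᵢ) Wᵢ`,
`z = (q, s)`, the vector `g z = (1 - T z + (ℓ ∘ P) ⊗ e)⁻¹ e` is fixed by `T z` up to a scalar
multiple `F z` of `e`, which depends analytically on `z`. -/
lemma exists_perturbation {ι : Type*} [Fintype ι] (a : ι → ℝ) (M W : ι → X →L[ℝ] X) (q₀ s₀ : ℝ)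
    (e : X) (l : X →L[ℝ] ℝ) (hle : l e = 1) (hP : (∑ i, W i) e = e)
    (hu : IsUnit (1 - (∑ i, W i - (l.comp (∑ i, W i)).smulRight e))) :
    ∃ F : ℝ × ℝ → ℝ, ∃ g : ℝ × ℝ → X, AnalyticAt ℝ F (q₀, s₀) ∧ F (q₀, s₀) = 0 ∧
      g (q₀, s₀) = e ∧ ContinuousAt g (q₀, s₀) ∧ ∀ᶠ z in 𝓝 (q₀, s₀),
        ∑ i, Real.exp ((z.1 - q₀) * a i) • NormedSpace.exp ((z.2 - s₀) • M i) (W i (g z))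
          = g z + F z • e := by
  set P := ∑ i, W i with hPd
  set R : X →L[ℝ] X := (l.comp P).smulRight e with hR
  set T : ℝ × ℝ → X →L[ℝ] X := fun z =>
    ∑ i, Real.exp ((z.1 - q₀) * a i) • (NormedSpace.exp ((z.2 - s₀) • M i) * W i) with hT
  have hTa : AnalyticAt ℝ T (q₀, s₀) :=
    Finset.analyticAt_fun_sum _ fun i _ => analyticAt_exp_mul _ _ _ _ _ _
  have hT0 : T (q₀, s₀) = P := by simp [hT, hPd]
  set U : ℝ × ℝ → X →L[ℝ] X := fun z => 1 - (T z - R) with hU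
  have hUa : AnalyticAt ℝ U (q₀, s₀) := analyticAt_const.sub (hTa.sub analyticAt_const)
  have hU0 : IsUnit (U (q₀, s₀)) := by
    simp only [hU, hT0]; exact hu
  have hIa : AnalyticAt ℝ (fun z => Ring.inverse (U z)) (q₀, s₀) := by
    obtain ⟨u, hu⟩ := hU0
    have := analyticAt_inverse (𝕜 := ℝ) u
    rw [hu] at this
    exact AnalyticAt.comp (f := U) this hUa
  set g : ℝ × ℝ → X := fun z => Ring.inverse (U z) e with hg
  have hga : AnalyticAt ℝ g (q₀, s₀) :=
    ((ContinuousLinearMap.apply ℝ X e).analyticAt _).comp hIa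
  have hPa : AnalyticAt ℝ (fun z => l (P (g z))) (q₀, s₀) :=
    ((l.comp P).analyticAt _).comp hga
  have hg0 : g (q₀, s₀) = e := by
    have h1 : U (q₀, s₀) e = e := by
      simp [hU, hT0, hR, hP, hle]
    calc g (q₀, s₀) = Ring.inverse (U (q₀, s₀)) (U (q₀, s₀) e) := by rw [h1]
      _ = (Ring.inverse (U (q₀, s₀)) * U (q₀, s₀)) e := rfl
      _ = e := by rw [Ring.inverse_mul_cancel _ hU0]; rfl
  refine ⟨fun z => l (P (g z)) - 1, g, hPa.sub analyticAt_const, ?_, hg0, hga.continuousAt, ?_⟩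
  · simp only [hg0, hP, hle, sub_self]
  · have hev : ∀ᶠ z in 𝓝 (q₀, s₀), IsUnit (U z) :=
      hUa.continuousAt.eventually (Units.isOpen.mem_nhds hU0)
    filter_upwards [hev] with z hz
    have h1 : U z (g z) = e := by
      calc U z (g z) = (U z * Ring.inverse (U z)) e := rfl
        _ = e := by rw [Ring.mul_inverse_cancel _ hz]; rfl
    have h2 : T z (g z) =
        ∑ i, Real.exp ((z.1 - q₀) * a i) • NormedSpace.exp ((z.2 - s₀) • M i) (W i (g z)) := by
      simp [hT]
    have h3 : U z (g z) = g z - (T z (g z) - l (P (g z)) • e) := by simp [hU, hR]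
    rw [← h2, sub_smul, one_smul]
    rw [h1] at h3
    nth_rewrite 2 [h3]
    abel

/-- `1 - Q` is invertible as soon as some power of `Q` is a strict contraction. -/
lemma isUnit_one_sub_of_pow {Q : X →L[ℝ] X} {n : ℕ} (h : ‖Q ^ n‖ < 1) : IsUnit (1 - Q) := by
  have h1 : IsUnit ((1 - Q) * ∑ i ∈ Finset.range n, Q ^ i) := by
    rw [mul_neg_geom_sum]
    exact isUnit_one_sub_of_norm_lt_one h
  have hc : Commute (1 - Q) (∑ i ∈ Finset.range n, Q ^ i) :=
    Commute.sum_right _ _ _ fun i _ => ((Commute.one_left _).sub_left (Commute.refl Q)).pow_right i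
  exact (hc.isUnit_mul_iff.mp h1).1

end Perturbation

/-! ### Spectral gap of the Markov averages -/

section Gap

variable {ι : Type*} [Fintype ι] {θ K : ℝ} {π : ι → List ι → ℝ}

lemma Transition.hBound (hπ : Transition θ K π) (hθ : θ ∈ Set.Ioo (0 : ℝ) 1) (hK : 0 ≤ K) (i : ι) :
    HBound θ (K * Real.exp K) (π i) := by
  have h1 : ∀ w, π i w ≤ 1 := fun w => by
    rw [← hπ.sum_eq w]
    exact Finset.single_le_sum (fun j _ => hπ.nonneg j w) (Finset.mem_univ i)
  have key : ∀ b w w', π i (b ++ w) - π i (b ++ w') ≤ K * Real.exp K * θ ^ b.length := by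
    intro b w w'
    have hp : 0 ≤ θ ^ b.length := pow_nonneg hθ.1.le _
    have hp1 : θ ^ b.length ≤ 1 := pow_le_one₀ hθ.1.le hθ.2.le
    set x := K * θ ^ b.length with hx
    have hx0 : 0 ≤ x := mul_nonneg hK hp
    have hxK : x ≤ K := mul_le_of_le_one_right hK hp1
    have h2 := hπ.holder i b w w'
    have h3 : (Real.exp x - 1) * π i (b ++ w') ≤ (Real.exp x - 1) * 1 :=
      mul_le_mul_of_nonneg_left (h1 _) (by linarith [Real.one_le_exp hx0])
    -- `exp x - 1 ≤ x exp x`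
    have h4 : (1 - x) * Real.exp x ≤ Real.exp (-x) * Real.exp x :=
      mul_le_mul_of_nonneg_right (by linarith [Real.add_one_le_exp (-x)]) (Real.exp_pos _).le
    rw [← Real.exp_add, neg_add_cancel, Real.exp_zero] at h4
    have h5 : x * Real.exp x ≤ x * Real.exp K :=
      mul_le_mul_of_nonneg_left (Real.exp_le_exp.mpr hxK) hx0
    have h6 : x * Real.exp K = K * Real.exp K * θ ^ b.length := by rw [hx]; ring
    linarith
  intro b w w'
  rw [abs_le]
  constructor <;> linarith [key b w w', key b w' w]

/-- The weighted inverse branches `f ↦ (w ↦ π_i(w) f(iw))`. -/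
lemma Transition.exists_branchOp (hπ : Transition θ K π) (hθ : θ ∈ Set.Ioo (0 : ℝ) 1) (hK : 0 ≤ K) :
    ∃ W : ι → HSpace ι →L[ℝ] HSpace ι, ∀ i x w, ev θ (W i x) w = π i w * ev θ x (i :: w) := by
  choose S hS using fun i => exists_mulOp hθ (hπ.hBound hθ hK i)
  choose Z hZ using fun i : ι => exists_shiftOp hθ i
  exact ⟨fun i => (S i).comp (Z i), fun i x w => by
    rw [ContinuousLinearMap.comp_apply, hS, hZ]⟩

lemma ev_sum_branchOp {W : ι → HSpace ι →L[ℝ] HSpace ι}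
    (hW : ∀ i x w, ev θ (W i x) w = π i w * ev θ x (i :: w)) (x : HSpace ι) (w : List ι) :
    ev θ ((∑ i, W i) x) w = avg π (ev θ x) w := by
  rw [sum_apply, map_sum, Finset.sum_apply]
  exact Finset.sum_congr rfl fun i _ => hW i x w

/-- On Hölder functions modulo constants, the powers of the averaging operator tend to `0`; hence
`1` is a simple eigenvalue, whose complementary part has `1` in its resolvent set. -/
lemma Transition.isUnit_gap (hπ : Transition θ K π) (hθ : θ ∈ Set.Ioo (0 : ℝ) 1) (hK : 0 ≤ K)
    {W : ι → HSpace ι →L[ℝ] HSpace ι}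
    (hW : ∀ i x w, ev θ (W i x) w = π i w * ev θ x (i :: w))
    {e : HSpace ι} (he : ev θ e = fun _ => 1) {l : HSpace ι →L[ℝ] ℝ} (hl : ∀ x, l x = ev θ x []) :
    IsUnit (1 - (∑ i, W i - (l.comp (∑ i, W i)).smulRight e)) := by
  obtain ⟨D, ρ, hρ, c₁, hc₁, c₂, hc₂, hD1, hDl, hDu, hD⟩ := exists_weights hθ hK
  set Q : HSpace ι →L[ℝ] HSpace ι := ∑ i, W i - (l.comp (∑ i, W i)).smulRight e with hQ
  have hQe : ∀ x w, ev θ (Q x) w = avg π (ev θ x) w - avg π (ev θ x) [] := by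
    intro x w
    rw [hQ, sub_apply, map_sub, Pi.sub_apply, ev_sum_branchOp hW,
      ContinuousLinearMap.smulRight_apply, map_smul, Pi.smul_apply, he,
      ContinuousLinearMap.comp_apply, hl, ev_sum_branchOp hW, smul_eq_mul, mul_one]
  have h1θ : 0 < (1 - θ)⁻¹ := inv_pos.mpr (by linarith [hθ.2])
  set B := 2 * (1 - θ)⁻¹ / c₁ with hB
  have hB0 : 0 < B := by positivity
  have hosc : ∀ (n : ℕ) (x : HSpace ι), OscBound D (ρ ^ n * (B * ‖x‖)) (ev θ ((Q ^ n) x)) := by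
    intro n x
    induction n with
    | zero =>
      intro b w w'
      refine (hBound_ev hθ x b w w').trans ?_
      have := mul_le_mul_of_nonneg_left (hDl b.length) (by positivity : 0 ≤ B * ‖x‖)
      rw [pow_zero, one_mul]
      refine le_trans (le_of_eq ?_) this
      rw [hB]
      field_simp
    | succ n ih =>
      have h1 := OscBound.avg hπ hD1 hD (by have := hρ.1; positivity) ih
      intro b w w'
      have h2 := h1 b w w'
      rw [pow_succ', mul_apply_eq_comp, hQe, hQe, sub_sub_sub_cancel_right, pow_succ', mul_assoc ρ]
      exact h2
  have hnorm : ∀ n : ℕ, ‖Q ^ (n + 1)‖ ≤ c₂ * B / θ * ρ ^ (n + 1) := by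
    intro n
    have hρn : 0 < ρ ^ (n + 1) := pow_pos hρ.1 _
    refine ContinuousLinearMap.opNorm_le_bound _ (by have := hθ.1; positivity) fun x => ?_
    obtain ⟨y, hy, hyn⟩ := exists_ev_eq (V := c₂ * (ρ ^ (n + 1) * (B * ‖x‖)))
      (f := ev θ ((Q ^ (n + 1)) x)) hθ (by
        rw [pow_succ' Q, mul_apply_eq_comp, hQe, sub_self, abs_zero]
        positivity) (fun b w w' => by
        refine (hosc (n + 1) x b w w').trans ?_
        have := mul_le_mul_of_nonneg_left (hDu b.length)
          (by positivity : 0 ≤ ρ ^ (n + 1) * (B * ‖x‖))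
        refine this.trans_eq ?_
        ring)
    rw [← ev_injective hθ hy]
    refine hyn.trans_eq ?_
    ring
  have ht : Tendsto (fun n : ℕ => c₂ * B / θ * ρ ^ (n + 1)) atTop (𝓝 0) := by
    simpa using ((tendsto_pow_atTop_nhds_zero_of_lt_one hρ.1.le hρ.2).comp
      (tendsto_add_atTop_nat 1)).const_mul (c₂ * B / θ)
  obtain ⟨n, hn⟩ := (ht.eventually (gt_mem_nhds one_pos)).exists
  exact isUnit_one_sub_of_pow ((hnorm n).trans_lt hn)

end Gap

/-! ### Analyticity of the zero of the pressure -/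

section Analytic

variable {ι : Type*} [Fintype ι] {A : ι → SL2} {p : ι → ℝ} {c r L : ℝ}

omit [Fintype ι] in
lemma psi_perturb (hp : ∀ i, 0 < p i) (q s q' s' : ℝ) (i : ι) (w : List ι) :
    psi A p q' s' i w =
      Real.exp ((q' - q) * Real.log (p i)) * Real.exp ((s' - s) * phi A i w) * psi A p q s i w := by
  rw [psi, psi, Real.rpow_def_of_pos (hp i), Real.rpow_def_of_pos (hp i), ← Real.exp_add,
    ← Real.exp_add, ← Real.exp_add, ← Real.exp_add]
  congr 1
  ring

variable [Nonempty ι]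

/-- Near a zero `(q₀, s₀)` of the pressure there is an analytic function `F` which bounds the
pressure and whose zeros are zeros of the pressure. -/
lemma HypData.exists_local (h : HypData A c r L) (hp : ∀ i, 0 < p i) {q₀ s₀ : ℝ}
    (h0 : pressure A p q₀ s₀ = 0) :
    ∃ F : ℝ × ℝ → ℝ, AnalyticAt ℝ F (q₀, s₀) ∧ F (q₀, s₀) = 0 ∧ ∀ᶠ z in 𝓝 (q₀, s₀),
      pressure A p z.1 z.2 ≤ Real.logb 2 (1 + 2 * |F z|) ∧
      (F z = 0 → pressure A p z.1 z.2 = 0) := by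
  obtain ⟨C, hC, θ, hθ, hf⟩ := h.exists_phi_holder
  have hψ := potential_psi hp hC hθ hf q₀ s₀
  have ht := h.tendsto_pressure hp q₀ s₀
  rw [h0] at ht
  obtain ⟨η, m, hm, M, hη, hηl, hηe⟩ := hψ.exists_eigenfunction (by
    simpa only [iter_psi_nil hp, ← psiAvg_eq] using ht)
  have hη0 : ∀ w, 0 < η w := fun w => hm.trans_le (hη w).1
  have hπ := hψ.transition hηl hηl hη0 hη0 hηe
  have h1θ : 0 < 1 - θ := by linarith [hθ.2]
  have hθ0 := hθ.1
  obtain ⟨W, hW⟩ := hπ.exists_branchOp hθ (by positivity)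
  obtain ⟨e, he⟩ := exists_one (ι := ι) hθ
  obtain ⟨l, hl⟩ := exists_evalCLM (ι := ι) hθ []
  choose T hT using fun i => exists_mulOp hθ (show HBound θ C (phi A i) from hf i)
  have hPe : (∑ i, W i) e = e := by
    apply ev_injective hθ
    funext w
    rw [ev_sum_branchOp hW, he, avg]
    simp only [mul_one]
    exact hπ.sum_eq w
  obtain ⟨F, g, hFa, hF0, hg0, hgc, hFg⟩ := exists_perturbation (fun i => Real.log (p i)) T W q₀ s₀
    e l (by rw [hl, he]) hPe (hπ.isUnit_gap hθ (by positivity) hW he hl)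
  refine ⟨F, hFa, hF0, ?_⟩
  have hclose : ∀ᶠ z in 𝓝 (q₀, s₀), (1 - θ)⁻¹ * ‖g z - e‖ < 1 / 2 := by
    have h1 : Tendsto (fun z => (1 - θ)⁻¹ * ‖g z - e‖) (𝓝 (q₀, s₀)) (𝓝 0) := by
      have h2 : Tendsto (fun z => (1 - θ)⁻¹ * ‖g z - e‖) (𝓝 (q₀, s₀))
          (𝓝 ((1 - θ)⁻¹ * ‖g (q₀, s₀) - e‖)) := (hgc.sub continuousAt_const).norm.const_mul _
      simpa [hg0] using h2
    exact h1.eventually (gt_mem_nhds (by norm_num))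
  filter_upwards [hFg, hclose] with z hz hzc
  have hg1 : ∀ w, |ev θ (g z) w - 1| < 1 / 2 := fun w => by
    have h1 := abs_ev_le hθ (g z - e) w
    rw [map_sub, Pi.sub_apply, he] at h1
    exact h1.trans_lt hzc
  have heq : ∀ w, ∑ i, psi A p z.1 z.2 i w * (η (i :: w) * ev θ (g z) (i :: w)) =
      η w * (ev θ (g z) w + F z) := by
    intro w
    have h1 := congrArg (fun x => ev θ x w) hz
    simp only [map_sum, Finset.sum_apply, map_add, map_smul, Pi.add_apply, Pi.smul_apply,
      smul_eq_mul, he, ev_exp_mulOp hθ (hT _), hW, mul_one] at h1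
    rw [← h1, Finset.mul_sum]
    refine Finset.sum_congr rfl fun i _ => ?_
    rw [psi_perturb hp q₀ s₀]
    have := (hη0 w).ne'
    field_simp
  have hb : ∀ w, m / 2 ≤ η w * ev θ (g z) w ∧ η w * ev θ (g z) w ≤ M * (3 / 2) := by
    intro w
    have h1 := abs_lt.mp (hg1 w)
    have h2 := hη w
    constructor <;> nlinarith
  constructor
  · refine h.pressure_le hp (half_pos hm) (by positivity) hb fun w => ?_
    rw [heq]
    have h1 := abs_lt.mp (hg1 w)
    have h2 := le_abs_self (F z)
    have h3 := abs_nonneg (F z)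
    have h4 : ev θ (g z) w + F z ≤ (1 + 2 * |F z|) * ev θ (g z) w := by nlinarith
    have h5 := mul_le_mul_of_nonneg_left h4 (hη0 w).le
    linarith
  · intro hFz
    have heq' : ∀ w, ∑ i, psi A p z.1 z.2 i w * (η (i :: w) * ev θ (g z) (i :: w)) =
        1 * (η w * ev θ (g z) w) := fun w => by rw [heq, hFz]; ring
    have h1 := h.pressure_le hp (half_pos hm) one_pos hb fun w => (heq' w).le
    have h2 := h.le_pressure hp (half_pos hm) one_pos hb fun w => (heq' w).ge
    rw [Real.logb_one] at h1 h2
    exact le_antisymm h1 h2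

/-- The pressure grows at a definite rate in `s`, and so does any analytic `F` bounding it. -/
lemma HypData.fderiv_ne_zero (h : HypData A c r L) (hp : ∀ i, 0 < p i) {q₀ s₀ : ℝ}
    (h0 : pressure A p q₀ s₀ = 0) {F : ℝ × ℝ → ℝ} (hFa : AnalyticAt ℝ F (q₀, s₀))
    (hF0 : F (q₀, s₀) = 0)
    (hF : ∀ᶠ z in 𝓝 (q₀, s₀), pressure A p z.1 z.2 ≤ Real.logb 2 (1 + 2 * |F z|)) :
    fderiv ℝ F (q₀, s₀) (0, 1) ≠ 0 := by
  intro hd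
  have h1 : HasDerivAt (fun t : ℝ => F (q₀, s₀ + t)) 0 0 := by
    have h2 : HasDerivAt (fun t : ℝ => (q₀, s₀ + t)) ((0 : ℝ), (1 : ℝ)) 0 :=
      (hasDerivAt_const (0 : ℝ) q₀).prodMk ((hasDerivAt_id (0 : ℝ)).const_add s₀)
    have h3 : HasFDerivAt F (fderiv ℝ F (q₀, s₀)) (q₀, s₀ + 0) := by
      rw [add_zero]; exact hFa.differentiableAt.hasFDerivAt
    have h4 := h3.comp_hasDerivAt (0 : ℝ) h2
    rw [hd] at h4
    exact h4
  have hr : 0 < Real.log r := Real.log_pos h.r_gt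
  have hlog2 : 0 < Real.log 2 := Real.log_pos one_lt_two
  have h2 := (hasDerivAt_iff_isLittleO_nhds_zero.mp h1).def (half_pos hr)
  simp only [zero_add, add_zero, hF0, sub_zero, smul_zero] at h2
  have hc : Tendsto (fun t : ℝ => (q₀, s₀ + t)) (𝓝 0) (𝓝 (q₀, s₀)) := by
    have : Continuous (fun t : ℝ => (q₀, s₀ + t)) := by fun_prop
    simpa using this.tendsto 0
  have h3 := h2.and (hc.eventually hF)
  obtain ⟨t, ⟨ht1, ht2⟩, ht0⟩ := ((h3.filter_mono nhdsWithin_le_nhds).and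
    (self_mem_nhdsWithin (a := (0 : ℝ)) (s := Ioi 0))).exists
  have ht0 : 0 < t := ht0
  rw [Real.norm_eq_abs, Real.norm_eq_abs, abs_of_pos ht0] at ht1
  have h4 := (h.pressure_bounds hp q₀ (s := s₀) (s' := s₀ + t) (by linarith)).1
  rw [h0] at h4
  have h5 := h4.trans ht2
  rw [Real.logb, Real.logb, zero_add, add_sub_cancel_left, ← mul_div_assoc,
    div_le_div_iff_of_pos_right hlog2] at h5
  have h6 := Real.log_le_sub_one_of_pos (x := 1 + 2 * |F (q₀, s₀ + t)|) (by positivity)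
  have h7 : 0 < t * Real.log r := mul_pos ht0 hr
  linarith

/-- A function whose graph consists of zeros of the pressure is analytic. -/
lemma HypData.analyticAt_zero (h : HypData A c r L) (hp : ∀ i, 0 < p i) {τ : ℝ → ℝ}
    (hτ : ∀ q, pressure A p q (τ q) = 0) (q₀ : ℝ) : AnalyticAt ℝ τ q₀ := by
  obtain ⟨F, hFa, hF0, hF⟩ := h.exists_local hp (hτ q₀)
  have hd := h.fderiv_ne_zero hp (hτ q₀) hFa hF0 (hF.mono fun z hz => hz.1)
  have hcd : ContDiffAt ℝ ⊤ F (q₀, τ q₀) := hFa.contDiffAt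
  have hinv : (fderiv ℝ F (q₀, τ q₀) ∘SL ContinuousLinearMap.inr ℝ ℝ ℝ).IsInvertible := by
    refine ⟨ContinuousLinearEquiv.unitsEquivAut ℝ (Units.mk0 _ hd), ?_⟩
    ext
    simp
  have hne : (⊤ : WithTop ℕ∞) ≠ 0 := by simp
  set σ := hcd.implicitFunction hne hinv with hσ
  have hσa : AnalyticAt ℝ σ q₀ := (hcd.contDiffAt_implicitFunction hne hinv).analyticAt
  have hσ0 : σ q₀ = τ q₀ := hcd.implicitFunction_apply_self hne hinv
  have hσe : ∀ᶠ q in 𝓝 q₀, F (q, σ q) = 0 := by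
    have := hcd.eventually_apply_implicitFunction hne hinv
    rw [hF0] at this
    exact this
  have hσt : Tendsto (fun q => (q, σ q)) (𝓝 q₀) (𝓝 (q₀, τ q₀)) := by
    have := (continuousAt_id (x := q₀)).prodMk hσa.continuousAt
    rw [← hσ0]
    exact this
  refine hσa.congr ?_
  filter_upwards [hσe, hσt.eventually hF] with q hq hq'
  exact (h.existsUnique_zero hp q).unique (hq'.2 hq) (hτ q)

end Analytic

/-- for every q > 0 the pressure Ψ_q has a unique real zero τ̃(q), positive for
q > 1, and τ̃ is real analytic on (0, ∞). -/
theorem statement7 {ι : Type} [Fintype ι] (hcard : 2 ≤ Fintype.card ι)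
    (A : ι → SL2) (hUH : UniformlyHyperbolic A)
    (p : ι → ℝ) (hp : ∀ i, 0 < p i) (hp1 : ∑ i : ι, p i = 1) :
    ∃ tτ : ℝ → ℝ,
      (∀ q : ℝ, 0 < q →
        Filter.Tendsto (fun n => psiAvg A p q (tτ q) n) Filter.atTop (nhds 0) ∧
        ∀ s : ℝ, Filter.Tendsto (fun n => psiAvg A p q s n) Filter.atTop (nhds 0) →
          s = tτ q) ∧
      (∀ q : ℝ, 1 < q → 0 < tτ q) ∧
      AnalyticOnNhd ℝ tτ (Set.Ioi 0) := by
  have : Nonempty ι := Fintype.card_pos_iff.mp (by omega)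
  obtain ⟨c, r, L, h⟩ := exists_hypData hUH
  choose τ hτ hτu using fun q => h.existsUnique_zero hp q
  refine ⟨τ, fun q _ => ⟨?_, fun s hs => ?_⟩, fun q hq => h.zero_pos hcard hp hp1 hq (hτ q),
    fun q _ => h.analyticAt_zero hp hτ q⟩
  · have := h.tendsto_pressure hp q (τ q)
    rwa [hτ] at this
  · exact hτu q s (tendsto_nhds_unique (h.tendsto_pressure hp q s) hs)

end

end Paper
end
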